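/- arXiv:1912.01392 — 2 statements merged into one kernel-verified Lean document; each statement's English description precedes it below -/
import Mathlib

section
/- Let (A, Δ', ε) be a commutative Hopf algebra over a field k with antipode T; suppose (A, A) is a Hopf matched pair with coactions ρ and φ satisfying a_{1'} ⊗ a_{2'} = a_{1'(-1)} a_{2'[0]} ⊗ a_{1'(0)} a_{2'[1]}, and let Δ(a) = a_{1'} T(a_{2'(-1)}) ⊗ a_{2'(0)} with antipode S(a) = a_{(-1)} T(a_{(0)}), so that (A, Δ, Δ') is a commutative Hopf brace. Then the original coaction ρ is recovered from the Hopf brace by ρ(a) = S(a_1) a_{21'} ⊗ a_{22'} for all a ∈ A; conversely, starting from a commutative Hopf brace (A, Δ, Δ') and forming the matched-pair coactions ρ(a) = S(a_1) a_{21'} ⊗ a_{22'}, φ(a) = (T(a_{1'}))_{(-1)} a_{2'} ⊗ (T(a_{1'}))_{(0)} a_{3'}, the comultiplication reconstructed by a_{1'} T(a_{2'(-1)}) ⊗ a_{2'(0)} equals Δ. (These constructions are mutually inverse, giving the equivalence between commutative Hopf braces with second structure (A, Δ') and Hopf matched pairs (A, A) on (A, Δ') satisfying the above compatibility.) -/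
open TensorProduct

noncomputable section

namespace HopfPaper

/-- A Hopf algebra structure (comultiplication `Δ`, counit `ε`, antipode `S`) on a
given `k`-algebra `H`, expressed in terms of `k`-linear maps.  Together with the
algebra structure of `H` this is exactly the data of a Hopf algebra
`(H, m, 1, Δ, ε, S)` over the field `k`. -/
structure HopfStruct (k : Type*) [Field k] (H : Type*) [Ring H] [Algebra k H] where
  /-- the comultiplication -/
  Δ : H →ₗ[k] H ⊗[k] H
  /-- the counit -/
  ε : H →ₗ[k] k
  /-- the antipode -/
  S : H →ₗ[k] H
  coassoc : ∀ h : H,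
    TensorProduct.map (LinearMap.id : H →ₗ[k] H) Δ (Δ h)
      = TensorProduct.assoc k H H H
          (TensorProduct.map Δ (LinearMap.id : H →ₗ[k] H) (Δ h))
  counit_left : ∀ h : H,
    TensorProduct.lid k H (TensorProduct.map ε (LinearMap.id : H →ₗ[k] H) (Δ h)) = h
  counit_right : ∀ h : H,
    TensorProduct.rid k H (TensorProduct.map (LinearMap.id : H →ₗ[k] H) ε (Δ h)) = h
  comul_mul : ∀ a b : H, Δ (a * b) = Δ a * Δ b
  comul_one : Δ 1 = 1
  counit_mul : ∀ a b : H, ε (a * b) = ε a * ε b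
  counit_one : ε 1 = 1
  antipode_left : ∀ h : H,
    LinearMap.mul' k H (TensorProduct.map S (LinearMap.id : H →ₗ[k] H) (Δ h))
      = algebraMap k H (ε h)
  antipode_right : ∀ h : H,
    LinearMap.mul' k H (TensorProduct.map (LinearMap.id : H →ₗ[k] H) S (Δ h))
      = algebraMap k H (ε h)

variable (k : Type*) [Field k]

/-- `m ↦ m ⊗ 1`. -/
def ι₁ (M N : Type*) [Ring M] [Algebra k M] [Ring N] [Algebra k N] :
    M →ₗ[k] M ⊗[k] N :=
  (TensorProduct.mk k M N).flip 1

/-- `n ↦ 1 ⊗ n`. -/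
def ι₂ (M N : Type*) [Ring M] [Algebra k M] [Ring N] [Algebra k N] :
    N →ₗ[k] M ⊗[k] N :=
  TensorProduct.mk k M N 1

/-- multiplication of three factors, `x ⊗ (y ⊗ z) ↦ x * y * z`. -/
def mul₃ (T : Type*) [Ring T] [Algebra k T] : T ⊗[k] (T ⊗[k] T) →ₗ[k] T :=
  (LinearMap.mul' k T).comp
    (TensorProduct.map (LinearMap.id : T →ₗ[k] T) (LinearMap.mul' k T))

/-- multiplication of four factors. -/
def mul₄ (T : Type*) [Ring T] [Algebra k T] :
    T ⊗[k] (T ⊗[k] (T ⊗[k] T)) →ₗ[k] T :=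
  (LinearMap.mul' k T).comp
    (TensorProduct.map (LinearMap.id : T →ₗ[k] T) (mul₃ k T))

/-- The left hand side `h_{1'} ⊗ h_{2'1} ⊗ h_{2'2}` of the Hopf brace compatibility
condition (2.1), i.e. `(id ⊗ Δ) ∘ Δ'`. -/
def braceLHS (H : Type*) [Ring H] [Algebra k H] (Δ Δ' : H →ₗ[k] H ⊗[k] H) :
    H →ₗ[k] H ⊗[k] (H ⊗[k] H) :=
  (TensorProduct.map (LinearMap.id : H →ₗ[k] H) Δ).comp Δ'

/-- The right hand side `h_{11'}S(h_2)h_{31'} ⊗ h_{12'} ⊗ h_{32'}` of the Hopf brace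
compatibility condition (2.1):  it is obtained from the twofold comultiplication
`h ↦ h_1 ⊗ (h_2 ⊗ h_3)` (using `Δ`) by applying `Δ'` to the first and third legs,
`S` to the middle leg, placing the results in the appropriate tensor positions of
`H ⊗ (H ⊗ H)` (filled with `1`s) and multiplying. -/
def braceRHS (H : Type*) [Ring H] [Algebra k H] (Δ Δ' : H →ₗ[k] H ⊗[k] H)
    (S : H →ₗ[k] H) : H →ₗ[k] H ⊗[k] (H ⊗[k] H) :=
  (mul₃ k (H ⊗[k] (H ⊗[k] H))).comp
    ((TensorProduct.map
        ((TensorProduct.map (LinearMap.id : H →ₗ[k] H) (ι₁ k H H)).comp Δ')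
        (TensorProduct.map ((ι₁ k H (H ⊗[k] H)).comp S)
          ((TensorProduct.map (LinearMap.id : H →ₗ[k] H) (ι₂ k H H)).comp Δ'))).comp
      ((TensorProduct.map (LinearMap.id : H →ₗ[k] H) Δ).comp Δ))

/-- A Hopf brace on the `k`-algebra `H` : two Hopf algebra structures sharing the
multiplication and unit of `H`, subject to the compatibility condition (2.1):
`h_{1'} ⊗ h_{2'1} ⊗ h_{2'2} = h_{11'}S(h_2)h_{31'} ⊗ h_{12'} ⊗ h_{32'}`. -/
structure HopfBrace (H : Type*) [Ring H] [Algebra k H] where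
  fst : HopfStruct k H
  snd : HopfStruct k H
  compat : ∀ h : H,
    braceLHS k H fst.Δ snd.Δ h = braceRHS k H fst.Δ snd.Δ fst.S h

/-- The coaction `ρ(h) = S(h_1) h_{21'} ⊗ h_{22'}` of Lemma 2.5. -/
def ρmap (H : Type*) [Ring H] [Algebra k H] (Δ Δ' : H →ₗ[k] H ⊗[k] H)
    (S : H →ₗ[k] H) : H →ₗ[k] H ⊗[k] H :=
  (LinearMap.mul' k (H ⊗[k] H)).comp
    ((TensorProduct.map ((ι₁ k H H).comp S) Δ').comp Δ)

/-- The coaction `φ(a) = (T(a_{1'}))_{(-1)} a_{2'} ⊗ (T(a_{1'}))_{(0)} a_{3'}`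
of Lemma 2.8(2), where `x_{(-1)} ⊗ x_{(0)} = ρ(x)`. -/
def φmap (H : Type*) [Ring H] [Algebra k H] (Δ Δ' : H →ₗ[k] H ⊗[k] H)
    (S T : H →ₗ[k] H) : H →ₗ[k] H ⊗[k] H :=
  (LinearMap.mul' k (H ⊗[k] H)).comp
    ((TensorProduct.map ((ρmap k H Δ Δ' S).comp T)
        (LinearMap.id : H ⊗[k] H →ₗ[k] H ⊗[k] H)).comp
      ((TensorProduct.map (LinearMap.id : H →ₗ[k] H) Δ').comp Δ'))

/-- `ρ : A →ₗ H ⊗ A` is a coassociative counital left coaction of the coalgebra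
`(H, ΔH, εH)`. -/
def LeftCoaction (A H : Type*) [Ring A] [Algebra k A] [Ring H] [Algebra k H]
    (ΔH : H →ₗ[k] H ⊗[k] H) (εH : H →ₗ[k] k) (ρ : A →ₗ[k] H ⊗[k] A) : Prop :=
  (∀ a : A,
    TensorProduct.map (LinearMap.id : H →ₗ[k] H) ρ (ρ a)
      = TensorProduct.assoc k H H A
          (TensorProduct.map ΔH (LinearMap.id : A →ₗ[k] A) (ρ a))) ∧
  (∀ a : A,
    TensorProduct.lid k A (TensorProduct.map εH (LinearMap.id : A →ₗ[k] A) (ρ a)) = a)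

/-- `φ : H →ₗ H ⊗ A` is a coassociative counital right coaction of the coalgebra
`(A, ΔA, εA)`. -/
def RightCoaction (A H : Type*) [Ring A] [Algebra k A] [Ring H] [Algebra k H]
    (ΔA : A →ₗ[k] A ⊗[k] A) (εA : A →ₗ[k] k) (φ : H →ₗ[k] H ⊗[k] A) : Prop :=
  (∀ h : H,
    TensorProduct.map (LinearMap.id : H →ₗ[k] H) ΔA (φ h)
      = TensorProduct.assoc k H A A
          (TensorProduct.map φ (LinearMap.id : A →ₗ[k] A) (φ h))) ∧
  (∀ h : H,
    TensorProduct.rid k H (TensorProduct.map (LinearMap.id : H →ₗ[k] H) εA (φ h)) = h)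

/-- a linear map which is moreover multiplicative and unital. -/
def IsAlgebraMorphism (M N : Type*) [Ring M] [Algebra k M] [Ring N] [Algebra k N]
    (f : M →ₗ[k] N) : Prop :=
  (∀ a b : M, f (a * b) = f a * f b) ∧ f 1 = 1

/-- `a ↦ a_{1(-1)} a_{2(-1)} ⊗ a_{1(0)} ⊗ a_{2(0)}`, the right hand side of the
comodule coalgebra condition. -/
def comodCoalgRHS (A H : Type*) [Ring A] [Algebra k A] [Ring H] [Algebra k H]
    (ΔA : A →ₗ[k] A ⊗[k] A) (ρ : A →ₗ[k] H ⊗[k] A) :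
    A →ₗ[k] H ⊗[k] (A ⊗[k] A) :=
  (LinearMap.mul' k (H ⊗[k] (A ⊗[k] A))).comp
    ((TensorProduct.map
        ((TensorProduct.map (LinearMap.id : H →ₗ[k] H) (ι₁ k A A)).comp ρ)
        ((TensorProduct.map (LinearMap.id : H →ₗ[k] H) (ι₂ k A A)).comp ρ)).comp ΔA)

/-- The two conditions making a left `H`-comodule `(A, ρ)` a comodule coalgebra:
`a_{(-1)} ⊗ Δ(a_{(0)}) = a_{1(-1)} a_{2(-1)} ⊗ a_{1(0)} ⊗ a_{2(0)}` and
`a_{(-1)} ε(a_{(0)}) = ε(a) 1`. -/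
def IsComodCoalg (A H : Type*) [Ring A] [Algebra k A] [Ring H] [Algebra k H]
    (ΔA : A →ₗ[k] A ⊗[k] A) (εA : A →ₗ[k] k) (ρ : A →ₗ[k] H ⊗[k] A) : Prop :=
  (∀ a : A,
    TensorProduct.map (LinearMap.id : H →ₗ[k] H) ΔA (ρ a)
      = comodCoalgRHS k A H ΔA ρ a) ∧
  (∀ a : A,
    TensorProduct.rid k H (TensorProduct.map (LinearMap.id : H →ₗ[k] H) εA (ρ a))
      = algebraMap k H (εA a))

/-- `a ↦ a_{1(-1)} a_{2(-1)[0]} ⊗ a_{1(0)} a_{2(-1)[1]} ⊗ a_{2(0)}`, the right hand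
side of (HM2). -/
def HM2RHS (A H : Type*) [Ring A] [Algebra k A] [Ring H] [Algebra k H]
    (ΔA : A →ₗ[k] A ⊗[k] A) (ρ : A →ₗ[k] H ⊗[k] A) (φ : H →ₗ[k] H ⊗[k] A) :
    A →ₗ[k] H ⊗[k] (A ⊗[k] A) :=
  (LinearMap.mul' k (H ⊗[k] (A ⊗[k] A))).comp
    ((TensorProduct.map
        ((TensorProduct.map (LinearMap.id : H →ₗ[k] H) (ι₁ k A A)).comp ρ)
        ((TensorProduct.assoc k H A A).toLinearMap.comp
          ((TensorProduct.map φ (LinearMap.id : A →ₗ[k] A)).comp ρ))).comp ΔA)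

/-- `h ↦ h_{1[0]} ⊗ h_{1[1](-1)} h_{2[0]} ⊗ h_{1[1](0)} h_{2[1]}`, the right hand
side of (HM3). -/
def HM3RHS (A H : Type*) [Ring A] [Algebra k A] [Ring H] [Algebra k H]
    (ΔH : H →ₗ[k] H ⊗[k] H) (ρ : A →ₗ[k] H ⊗[k] A) (φ : H →ₗ[k] H ⊗[k] A) :
    H →ₗ[k] H ⊗[k] (H ⊗[k] A) :=
  (LinearMap.mul' k (H ⊗[k] (H ⊗[k] A))).comp
    ((TensorProduct.map
        ((TensorProduct.map (LinearMap.id : H →ₗ[k] H) ρ).comp φ)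
        ((ι₂ k H (H ⊗[k] A)).comp φ)).comp ΔH)

/-- A Hopf matched pair `(A, H)` (Definition 3.1): `ρ` makes `A` a left
`H`-comodule algebra, `φ` makes `H` a right `A`-comodule algebra, and the
compatibility conditions (HM1)–(HM4) hold. -/
def IsHopfMatchedPair (A H : Type*) [Ring A] [Algebra k A] [Ring H] [Algebra k H]
    (ΔA : A →ₗ[k] A ⊗[k] A) (εA : A →ₗ[k] k)
    (ΔH : H →ₗ[k] H ⊗[k] H) (εH : H →ₗ[k] k)
    (ρ : A →ₗ[k] H ⊗[k] A) (φ : H →ₗ[k] H ⊗[k] A) : Prop :=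
  LeftCoaction k A H ΔH εH ρ ∧
  IsAlgebraMorphism k A (H ⊗[k] A) ρ ∧
  RightCoaction k A H ΔA εA φ ∧
  IsAlgebraMorphism k H (H ⊗[k] A) φ ∧
  -- (HM1)
  (∀ a : A,
    TensorProduct.rid k H (TensorProduct.map (LinearMap.id : H →ₗ[k] H) εA (ρ a))
      = algebraMap k H (εA a)) ∧
  (∀ h : H,
    TensorProduct.lid k A (TensorProduct.map εH (LinearMap.id : A →ₗ[k] A) (φ h))
      = algebraMap k A (εH h)) ∧
  -- (HM2)
  (∀ a : A,
    TensorProduct.map (LinearMap.id : H →ₗ[k] H) ΔA (ρ a) = HM2RHS k A H ΔA ρ φ a) ∧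
  -- (HM3)
  (∀ h : H,
    TensorProduct.assoc k H H A
        (TensorProduct.map ΔH (LinearMap.id : A →ₗ[k] A) (φ h))
      = HM3RHS k A H ΔH ρ φ h) ∧
  -- (HM4)
  (∀ (a : A) (h : H), φ h * ρ a = ρ a * φ h)

/-- Equation (3.2): `Δ(a) = a_{1'} T(a_{2'(-1)}) ⊗ a_{2'(0)}`. -/
def Δfromρ (A : Type*) [Ring A] [Algebra k A] (Δ' : A →ₗ[k] A ⊗[k] A)
    (T : A →ₗ[k] A) (ρ : A →ₗ[k] A ⊗[k] A) : A →ₗ[k] A ⊗[k] A :=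
  (LinearMap.mul' k (A ⊗[k] A)).comp
    ((TensorProduct.map (ι₁ k A A)
        ((TensorProduct.map T (LinearMap.id : A →ₗ[k] A)).comp ρ)).comp Δ')

/-- Equation (3.3): `S(a) = a_{(-1)} T(a_{(0)})`. -/
def Sfromρ (A : Type*) [Ring A] [Algebra k A] (T : A →ₗ[k] A)
    (ρ : A →ₗ[k] A ⊗[k] A) : A →ₗ[k] A :=
  (LinearMap.mul' k A).comp
    ((TensorProduct.map (LinearMap.id : A →ₗ[k] A) T).comp ρ)

/-- The comultiplication `Δ_R(h) = R · Δ(h) · R⁻¹` obtained by conjugating `Δ` with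
an invertible element `R ∈ H ⊗ H`. -/
def conjComul (H : Type*) [Ring H] [Algebra k H] (R Rinv : H ⊗[k] H)
    (Δ : H →ₗ[k] H ⊗[k] H) : H →ₗ[k] H ⊗[k] H :=
  (LinearMap.mulLeft k R).comp ((LinearMap.mulRight k Rinv).comp Δ)

/-- The braiding candidate `c(x ⊗ y) = x_{(-1)} y_{[0]} ⊗ x_{(0)} y_{[1]}` of
Proposition 2.9, i.e. `c = mult ∘ (ρ ⊗ φ)`. -/
def cmap (A : Type*) [Ring A] [Algebra k A] (Δ Δ' : A →ₗ[k] A ⊗[k] A)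
    (S T : A →ₗ[k] A) : A ⊗[k] A →ₗ[k] A ⊗[k] A :=
  (LinearMap.mul' k (A ⊗[k] A)).comp
    (TensorProduct.map (ρmap k A Δ Δ' S) (φmap k A Δ Δ' S T))

/-- `γ(x ⊗ y) = x y_{(-1)} ⊗ y_{(0)}` for a coaction `ρ(y) = y_{(-1)} ⊗ y_{(0)}`. -/
def γmap (A : Type*) [Ring A] [Algebra k A] (ρ : A →ₗ[k] A ⊗[k] A) :
    A ⊗[k] A →ₗ[k] A ⊗[k] A :=
  (LinearMap.mul' k (A ⊗[k] A)).comp (TensorProduct.map (ι₁ k A A) ρ)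

/-- `σ(x ⊗ y) = y_2 ⊗ x S(y_1) y_3`. -/
def σmap (A : Type*) [Ring A] [Algebra k A] (Δ : A →ₗ[k] A ⊗[k] A)
    (S : A →ₗ[k] A) : A ⊗[k] A →ₗ[k] A ⊗[k] A :=
  (mul₄ k (A ⊗[k] A)).comp
    ((TensorProduct.map (ι₂ k A A)
        (TensorProduct.map ((ι₂ k A A).comp S)
          (TensorProduct.map (ι₁ k A A) (ι₂ k A A)))).comp
      (TensorProduct.map (LinearMap.id : A →ₗ[k] A)
        ((TensorProduct.map (LinearMap.id : A →ₗ[k] A) Δ).comp Δ)))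

/-- The usual tensor product comultiplication `Δ̂` on `A ⊗ H`:
`a ⊗ h ↦ (a_1 ⊗ h_1) ⊗ (a_2 ⊗ h_2)`. -/
def hatΔ (A H : Type*) [Ring A] [Algebra k A] [Ring H] [Algebra k H]
    (ΔA : A →ₗ[k] A ⊗[k] A) (ΔH : H →ₗ[k] H ⊗[k] H) :
    A ⊗[k] H →ₗ[k] (A ⊗[k] H) ⊗[k] (A ⊗[k] H) :=
  (TensorProduct.tensorTensorTensorComm k A A H H).toLinearMap.comp
    (TensorProduct.map ΔA ΔH)

/-- The bicrossed coproduct comultiplication on `A ⊗ H`: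
`Δ̃(a ⊗ h) = a_1 ⊗ a_{2(-1)} h_{1[0]} ⊗ a_{2(0)} h_{1[1]} ⊗ h_2`. -/
def bicrossΔ (A H : Type*) [Ring A] [Algebra k A] [Ring H] [Algebra k H]
    (ΔA : A →ₗ[k] A ⊗[k] A) (ΔH : H →ₗ[k] H ⊗[k] H)
    (ρ : A →ₗ[k] H ⊗[k] A) (φ : H →ₗ[k] H ⊗[k] A) :
    A ⊗[k] H →ₗ[k] (A ⊗[k] H) ⊗[k] (A ⊗[k] H) :=
  (LinearMap.mul' k ((A ⊗[k] H) ⊗[k] (A ⊗[k] H))).comp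
    (TensorProduct.map
      -- a ↦ (a_1 ⊗ a_{2(-1)}) ⊗ (a_{2(0)} ⊗ 1)
      ((TensorProduct.map (LinearMap.id : A ⊗[k] H →ₗ[k] A ⊗[k] H) (ι₁ k A H)).comp
        ((TensorProduct.assoc k A H A).symm.toLinearMap.comp
          ((TensorProduct.map (LinearMap.id : A →ₗ[k] A) ρ).comp ΔA)))
      -- h ↦ (1 ⊗ h_{1[0]}) ⊗ (h_{1[1]} ⊗ h_2)
      ((TensorProduct.map (ι₂ k A H) (LinearMap.id : A ⊗[k] H →ₗ[k] A ⊗[k] H)).comp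
        ((TensorProduct.assoc k H A H).toLinearMap.comp
          ((TensorProduct.map φ (LinearMap.id : H →ₗ[k] H)).comp ΔH))))

/-- The antipode of the bicrossed coproduct:
`S̃(a ⊗ h) = S_A(h_{[1]}) S_A(a_{(0)}) ⊗ S_H(h_{[0]}) S_H(a_{(-1)})`. -/
def bicrossS (A H : Type*) [Ring A] [Algebra k A] [Ring H] [Algebra k H]
    (SA : A →ₗ[k] A) (SH : H →ₗ[k] H)
    (ρ : A →ₗ[k] H ⊗[k] A) (φ : H →ₗ[k] H ⊗[k] A) :
    A ⊗[k] H →ₗ[k] A ⊗[k] H :=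
  (LinearMap.mul' k (A ⊗[k] H)).comp
    ((TensorProduct.map
        ((TensorProduct.map SA SH).comp ((TensorProduct.comm k H A).toLinearMap.comp φ))
        ((TensorProduct.map SA SH).comp ((TensorProduct.comm k H A).toLinearMap.comp ρ))).comp
      (TensorProduct.comm k A H).toLinearMap)

/-- The left hand side `h_{[0]} ⊗ h_{[1]1} ⊗ h_{[1]2}` of equation (4.1), where the
`A`-leg is comultiplied with `Δ'`. -/
def eq41LHS (A H : Type*) [Ring A] [Algebra k A] [Ring H] [Algebra k H]
    (Δ'A : A →ₗ[k] A ⊗[k] A) (φ : H →ₗ[k] H ⊗[k] A) :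
    H →ₗ[k] H ⊗[k] (A ⊗[k] A) :=
  (TensorProduct.map (LinearMap.id : H →ₗ[k] H) Δ'A).comp φ

/-- The right hand side `h_{1[0]} S(h_2) h_{3[0]} ⊗ h_{1[1]} ⊗ h_{3[1]}` of
equation (4.1). -/
def eq41RHS (A H : Type*) [Ring A] [Algebra k A] [Ring H] [Algebra k H]
    (ΔH : H →ₗ[k] H ⊗[k] H) (SH : H →ₗ[k] H) (φ : H →ₗ[k] H ⊗[k] A) :
    H →ₗ[k] H ⊗[k] (A ⊗[k] A) :=
  (mul₃ k (H ⊗[k] (A ⊗[k] A))).comp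
    ((TensorProduct.map
        ((TensorProduct.map (LinearMap.id : H →ₗ[k] H) (ι₁ k A A)).comp φ)
        (TensorProduct.map ((ι₁ k H (A ⊗[k] A)).comp SH)
          ((TensorProduct.map (LinearMap.id : H →ₗ[k] H) (ι₂ k A A)).comp φ))).comp
      ((TensorProduct.map (LinearMap.id : H →ₗ[k] H) ΔH).comp ΔH))

/-- `x ↦ x_{11'} S(x_2) ⊗ x_{12'} ⊗ 1 ∈ H ⊗ (H ⊗ A)`, an auxiliary map for
equations (4.2) and (4.3). -/
def LHmap (A H : Type*) [Ring A] [Algebra k A] [Ring H] [Algebra k H]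
    (ΔH Δ'H : H →ₗ[k] H ⊗[k] H) (SH : H →ₗ[k] H) :
    H →ₗ[k] H ⊗[k] (H ⊗[k] A) :=
  (LinearMap.mul' k (H ⊗[k] (H ⊗[k] A))).comp
    ((TensorProduct.map
        ((TensorProduct.map (LinearMap.id : H →ₗ[k] H) (ι₁ k H A)).comp Δ'H)
        ((ι₁ k H (H ⊗[k] A)).comp SH)).comp ΔH)

/-- The right hand side
`a_{(-1)11'} S(a_{(-1)2}) a_{(0)(-1)'} ⊗ a_{(-1)12'} ⊗ a_{(0)(0)'}` of
equation (4.2). -/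
def eq42RHS (A H : Type*) [Ring A] [Algebra k A] [Ring H] [Algebra k H]
    (ΔH Δ'H : H →ₗ[k] H ⊗[k] H) (SH : H →ₗ[k] H)
    (ρ ρ' : A →ₗ[k] H ⊗[k] A) :
    A →ₗ[k] H ⊗[k] (H ⊗[k] A) :=
  (LinearMap.mul' k (H ⊗[k] (H ⊗[k] A))).comp
    ((TensorProduct.map (LHmap k A H ΔH Δ'H SH)
        ((TensorProduct.map (LinearMap.id : H →ₗ[k] H) (ι₂ k H A)).comp ρ')).comp ρ)

/-- The right hand side
`h_{1[0]11'} S(h_{1[0]2}) h_{1[1](-1)'} h_2 ⊗ h_{1[0]12'} ⊗ h_{1[1](0)'}` of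
equation (4.3). -/
def eq43RHS (A H : Type*) [Ring A] [Algebra k A] [Ring H] [Algebra k H]
    (ΔH Δ'H : H →ₗ[k] H ⊗[k] H) (SH : H →ₗ[k] H)
    (ρ' : A →ₗ[k] H ⊗[k] A) (φ : H →ₗ[k] H ⊗[k] A) :
    H →ₗ[k] H ⊗[k] (H ⊗[k] A) :=
  (LinearMap.mul' k (H ⊗[k] (H ⊗[k] A))).comp
    ((TensorProduct.map
        ((LinearMap.mul' k (H ⊗[k] (H ⊗[k] A))).comp
          ((TensorProduct.map (LHmap k A H ΔH Δ'H SH)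
              ((TensorProduct.map (LinearMap.id : H →ₗ[k] H) (ι₂ k H A)).comp ρ')).comp φ))
        (ι₁ k H (H ⊗[k] A))).comp ΔH)

open Algebra.TensorProduct in
/-- The `R`-valued point obtained from a pair of `R`-valued points `x`, `y` by means of an
algebra map `f : A → A ⊗ A`. -/
def pointOp {k A R : Type*} [Field k] [CommRing A] [Algebra k A] [CommRing R] [Algebra k R]
    (f : A →ₐ[k] A ⊗[k] A) (x y : A →ₐ[k] R) : A →ₐ[k] R :=
  (productMap x y).comp f

namespace pointOp

open Algebra.TensorProduct

variable {k A R R' : Type*} [Field k] [CommRing A] [Algebra k A] [CommRing R] [Algebra k R]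
  [CommRing R'] [Algebra k R']

theorem mul'_map (x y : A →ₐ[k] R) (t : A ⊗[k] A) :
    LinearMap.mul' k R (TensorProduct.map x.toLinearMap y.toLinearMap t) = productMap x y t := by
  induction t with
  | zero => simp
  | tmul a b => simp
  | add s t hs ht => simp only [map_add, hs, ht]

theorem comp_eq (h : R →ₐ[k] R') (f : A →ₐ[k] A ⊗[k] A) (x y : A →ₐ[k] R) :
    h.comp (pointOp f x y) = pointOp f (h.comp x) (h.comp y) := by
  rw [pointOp, pointOp, ← AlgHom.comp_assoc]
  congr 1
  ext <;> simp

theorem includeLeft_includeRight (f : A →ₐ[k] A ⊗[k] A) :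
    pointOp f includeLeft includeRight = f := by
  have h : productMap (includeLeft : A →ₐ[k] A ⊗[k] A) includeRight = AlgHom.id k _ := by
    ext <;> simp
  rw [pointOp, h, AlgHom.id_comp]

theorem pointOp_pointOp (f g : A →ₐ[k] A ⊗[k] A) (T : A →ₐ[k] A) (x y : A →ₐ[k] R) :
    pointOp (pointOp f includeLeft (pointOp g (includeLeft.comp T) includeRight)) x y
      = pointOp f x (pointOp g (x.comp T) y) := by
  rw [pointOp, comp_eq, comp_eq, productMap_left, productMap_right, ← AlgHom.comp_assoc,
    productMap_left]

theorem pointOp_includeLeft (f g : A →ₐ[k] A ⊗[k] A) (S : A →ₐ[k] A) (x y : A →ₐ[k] R) :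
    pointOp (pointOp f (includeLeft.comp S) g) x y
      = pointOp f (x.comp S) (pointOp g x y) := by
  rw [pointOp, comp_eq, ← AlgHom.comp_assoc, productMap_left, ← pointOp]

theorem productMap_map_id (f : A →ₐ[k] A ⊗[k] A) (x y z : A →ₐ[k] R) (t : A ⊗[k] A) :
    productMap x (productMap y z) (TensorProduct.map LinearMap.id f.toLinearMap t)
      = productMap x (pointOp f y z) t := by
  induction t with
  | zero => simp
  | tmul a b => simp [pointOp]
  | add s t hs ht => simp only [map_add, hs, ht]

theorem productMap_assoc (x y z : A →ₐ[k] R) (t : (A ⊗[k] A) ⊗[k] A) :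
    productMap x (productMap y z) (TensorProduct.assoc k A A A t)
      = productMap (productMap x y) z t := by
  have h : (productMap x (productMap y z)).comp
      (Algebra.TensorProduct.assoc k k k A A A).toAlgHom
      = productMap (productMap x y) z := by
    ext <;> simp [Algebra.TensorProduct.one_def]
  exact DFunLike.congr_fun h t

theorem productMap_map_id_right (f : A →ₐ[k] A ⊗[k] A) (x y z : A →ₐ[k] R) (t : A ⊗[k] A) :
    productMap (productMap x y) z (TensorProduct.map f.toLinearMap LinearMap.id t)
      = productMap (pointOp f x y) z t := by
  induction t with
  | zero => simp
  | tmul a b => simp [pointOp]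
  | add s t hs ht => simp only [map_add, hs, ht]

theorem productMap_map_ι₁ (x y z : A →ₐ[k] R) (t : A ⊗[k] A) :
    productMap x (productMap y z) (TensorProduct.map LinearMap.id (ι₁ k A A) t)
      = productMap x y t := by
  induction t with
  | zero => simp
  | tmul a b => simp [ι₁]
  | add s t hs ht => simp only [map_add, hs, ht]

theorem productMap_map_ι₂ (x y z : A →ₐ[k] R) (t : A ⊗[k] A) :
    productMap x (productMap y z) (TensorProduct.map LinearMap.id (ι₂ k A A) t)
      = productMap x z t := by
  induction t with
  | zero => simp
  | tmul a b => simp [ι₂]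
  | add s t hs ht => simp only [map_add, hs, ht]

theorem apply_mul'_map {M N : Type*} [AddCommGroup M] [Module k M] [AddCommGroup N] [Module k N]
    (h : R →ₐ[k] R') (F : M →ₗ[k] R) (G : N →ₗ[k] R) (t : M ⊗[k] N) :
    h (LinearMap.mul' k R (TensorProduct.map F G t))
      = LinearMap.mul' k R' (TensorProduct.map (h.toLinearMap ∘ₗ F) (h.toLinearMap ∘ₗ G) t) := by
  induction t with
  | zero => simp
  | tmul a b => simp
  | add s t hs ht => simp only [map_add, hs, ht]

end pointOp

section Homs

variable {k A : Type*} [Field k] [CommRing A] [Algebra k A]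

/-- An algebra morphism bundled as an `AlgHom`. -/
def IsAlgebraMorphism.toAlgHom {M N : Type*} [Ring M] [Algebra k M] [Ring N] [Algebra k N]
    {f : M →ₗ[k] N} (hf : IsAlgebraMorphism k M N f) : M →ₐ[k] N :=
  .ofLinearMap f hf.2 hf.1

namespace HopfStruct

variable (B : HopfStruct k A)

/-- The Hopf algebra structure on `A` in the sense of Mathlib. -/
abbrev toHopfAlgebra : HopfAlgebra k A where
  comul := B.Δ
  counit := B.ε
  coassoc := LinearMap.ext fun a => (B.coassoc a).symm
  rTensor_counit_comp_comul := LinearMap.ext fun a =>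
    (TensorProduct.lid k A).injective <| (B.counit_left a).trans (by simp)
  lTensor_counit_comp_comul := LinearMap.ext fun a =>
    (TensorProduct.rid k A).injective <| (B.counit_right a).trans (by simp)
  counit_one := B.counit_one
  mul_compr₂_counit := by ext a b; exact B.counit_mul a b
  comul_one := B.comul_one
  mul_compr₂_comul := by ext a b; exact B.comul_mul a b
  antipode := B.S
  mul_antipode_rTensor_comul := LinearMap.ext B.antipode_left
  mul_antipode_lTensor_comul := LinearMap.ext B.antipode_right

/-- The comultiplication as an algebra map. -/
def comulHom : A →ₐ[k] A ⊗[k] A := .ofLinearMap B.Δ B.comul_one B.comul_mul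

/-- The counit as an algebra map. -/
def counitHom : A →ₐ[k] k := .ofLinearMap B.ε B.counit_one B.counit_mul

/-- The antipode as an algebra map. -/
def antipodeHom : A →ₐ[k] A :=
  .ofLinearMap B.S (@HopfAlgebra.antipode_one k A _ _ B.toHopfAlgebra)
    (@HopfAlgebra.antipode_mul_distrib k A _ _ B.toHopfAlgebra)

open Algebra.TensorProduct in
/-- The group structure on the `R`-valued points of a commutative Hopf algebra. -/
abbrev pointGroup (R : Type*) [CommRing R] [Algebra k R] : Group (A →ₐ[k] R) :=
  letI : Mul (A →ₐ[k] R) := ⟨pointOp B.comulHom⟩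
  letI : One (A →ₐ[k] R) := ⟨(Algebra.ofId k R).comp B.counitHom⟩
  letI : Inv (A →ₐ[k] R) := ⟨fun x => x.comp B.antipodeHom⟩
  Group.ofLeftAxioms
    (fun x y z => AlgHom.ext fun a => by
      have h := congrArg (productMap x (productMap y z)) (B.coassoc a)
      rw [pointOp.productMap_assoc] at h
      exact ((pointOp.productMap_map_id B.comulHom x y z (B.Δ a)).symm.trans h).trans
        (pointOp.productMap_map_id_right B.comulHom x y z (B.Δ a)) |>.symm)
    (fun x => AlgHom.ext fun a => by
      have h (t : A ⊗[k] A) : productMap ((Algebra.ofId k R).comp B.counitHom) x t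
          = x (TensorProduct.lid k A (TensorProduct.map B.ε LinearMap.id t)) := by
        induction t with
        | zero => simp
        | tmul a b => simp [counitHom, Algebra.ofId_apply, Algebra.smul_def]
        | add s t hs ht => simp only [map_add, hs, ht]
      exact (h _).trans (congrArg x (B.counit_left a)))
    (fun x => AlgHom.ext fun a => by
      have h (t : A ⊗[k] A) : productMap (x.comp B.antipodeHom) x t
          = x (LinearMap.mul' k A (TensorProduct.map B.S LinearMap.id t)) := by
        induction t with
        | zero => simp
        | tmul a b => simp [antipodeHom]
        | add s t hs ht => simp only [map_add, hs, ht]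
      exact ((h _).trans (congrArg x (B.antipode_left a))).trans (x.commutes _))

end HopfStruct

end Homs

section Points

open Algebra.TensorProduct

variable {k A R : Type*} [Field k] [CommRing A] [Algebra k A] [CommRing R] [Algebra k R]

theorem Δfromρ_eq_pointOp (Δ' ρ : A →ₐ[k] A ⊗[k] A) (T : A →ₐ[k] A) :
    Δfromρ k A Δ'.toLinearMap T.toLinearMap ρ.toLinearMap
      = (pointOp Δ' includeLeft (pointOp ρ (includeLeft.comp T) includeRight)).toLinearMap := by
  ext a
  have h : (TensorProduct.map T.toLinearMap LinearMap.id ∘ₗ ρ.toLinearMap)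
      = (pointOp ρ (includeLeft.comp T) includeRight).toLinearMap := by
    ext b
    have h' : Algebra.TensorProduct.map T (AlgHom.id k A)
        = productMap (includeLeft.comp T) includeRight := by ext <;> simp
    exact DFunLike.congr_fun h' (ρ b)
  rw [Δfromρ, h]
  exact pointOp.mul'_map (includeLeft : A →ₐ[k] A ⊗[k] A) _ (Δ' a)

theorem Sfromρ_eq_pointOp (ρ : A →ₐ[k] A ⊗[k] A) (T : A →ₐ[k] A) :
    Sfromρ k A T.toLinearMap ρ.toLinearMap = (pointOp ρ (AlgHom.id k A) T).toLinearMap :=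
  LinearMap.ext fun a => pointOp.mul'_map (AlgHom.id k A) T (ρ a)

theorem ρmap_eq_pointOp (Δ Δ' : A →ₐ[k] A ⊗[k] A) (S : A →ₐ[k] A) :
    ρmap k A Δ.toLinearMap Δ'.toLinearMap S.toLinearMap
      = (pointOp Δ (includeLeft.comp S) Δ').toLinearMap :=
  LinearMap.ext fun a =>
    pointOp.mul'_map ((includeLeft : A →ₐ[k] A ⊗[k] A).comp S) Δ' (Δ a)

theorem pointOp_of_HM2 {Δ' ρ φ : A →ₐ[k] A ⊗[k] A}
    (h : ∀ a, TensorProduct.map LinearMap.id Δ'.toLinearMap (ρ a)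
      = HM2RHS k A A Δ'.toLinearMap ρ.toLinearMap φ.toLinearMap a) (x y z : A →ₐ[k] R) :
    pointOp ρ x (pointOp Δ' y z) = pointOp Δ' (pointOp ρ x y) (pointOp ρ (pointOp φ x y) z) := by
  ext a
  have key := congrArg (productMap x (productMap y z)) (h a)
  rw [pointOp.productMap_map_id] at key
  refine key.trans ?_
  refine (pointOp.apply_mul'_map _ _ _ (Δ' a)).trans ?_
  refine Eq.trans ?_ (pointOp.mul'_map (pointOp ρ x y) (pointOp ρ (pointOp φ x y) z) (Δ' a))
  congr 3
  · ext b
    exact pointOp.productMap_map_ι₁ x y z (ρ b)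
  · ext b
    exact (pointOp.productMap_assoc x y z _).trans
      (pointOp.productMap_map_id_right φ x y z (ρ b))

theorem pointOp_of_brace {Δ Δ' : A →ₐ[k] A ⊗[k] A} {S : A →ₐ[k] A}
    (h : ∀ a, braceLHS k A Δ.toLinearMap Δ'.toLinearMap a
      = braceRHS k A Δ.toLinearMap Δ'.toLinearMap S.toLinearMap a) (x y z : A →ₐ[k] R) :
    pointOp Δ' x (pointOp Δ y z)
      = pointOp Δ (pointOp Δ' x y) (pointOp Δ (x.comp S) (pointOp Δ' x z)) := by
  ext a
  refine (pointOp.productMap_map_id Δ x y z (Δ' a)).symm.trans ?_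
  refine (congrArg (productMap x (productMap y z)) (h a)).trans ?_
  rw [braceRHS, mul₃]
  simp only [LinearMap.comp_apply]
  rw [← LinearMap.comp_apply (TensorProduct.map _ _), ← TensorProduct.map_comp,
    ← LinearMap.comp_apply (TensorProduct.map _ _), ← TensorProduct.map_comp]
  refine (pointOp.apply_mul'_map _ _ _ (Δ a)).trans ?_
  refine Eq.trans ?_ (pointOp.mul'_map (pointOp Δ' x y) _ (Δ a))
  congr 3
  · ext b
    exact pointOp.productMap_map_ι₁ x y z (Δ' b)
  · ext b
    refine (pointOp.apply_mul'_map (productMap x (productMap y z)) _ _ (Δ b)).trans ?_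
    refine Eq.trans ?_ (pointOp.mul'_map (x.comp S) (pointOp Δ' x z) (Δ b))
    congr 3
    · ext c
      simp [ι₁]
    · ext c
      exact pointOp.productMap_map_ι₂ x y z (Δ' c)

end Points

/-- In a group with a compatible matched pair of actions on itself, the left action is determined
by the group structure and the derived second multiplication. -/
theorem leftAction_eq_of_matchedPair {G : Type*} [Group G] (r l : G → G → G)
    (hr : ∀ x y z, r x (y * z) = r x y * r (l x y) z) (hc : ∀ x y, x * y = r x y * l x y)
    (x y : G) : r x y = r x x⁻¹ * r (r x x⁻¹)⁻¹ (x * y) := by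
  have h : (r x x⁻¹)⁻¹ = l x x⁻¹ := inv_eq_of_mul_eq_one_right (by rw [← hc, mul_inv_cancel])
  rw [h, ← hr, inv_mul_cancel_left]

/-- In a skew brace, the additive structure is recovered from the multiplicative structure `m`
and its left action. -/
theorem mul_eq_of_skewBrace {G : Type*} [Group G] (m : G → G → G) (i : G → G)
    (hm : ∀ x y, m x (m (i x) y) = y) (hb : ∀ x y z, m x (y * z) = m x y * (x⁻¹ * m x z))
    (x y : G) : x * y = m x ((i x)⁻¹ * m (i x) y) := by
  have h1 (x : G) : m x 1 = x := by
    have h := hb x 1 1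
    rw [mul_one, left_eq_mul, inv_mul_eq_one] at h
    exact h.symm
  have h2 : m x (i x) = 1 := by simpa only [h1] using hm x 1
  have h3 := hb x (i x)⁻¹ (i x)
  rw [inv_mul_cancel, h1, h2, mul_one, eq_mul_inv_iff_mul_eq] at h3
  rw [hb, hm, ← mul_assoc, ← h3, mul_inv_cancel_right]

section Commutative

open Algebra.TensorProduct

variable {k A : Type*} [Field k] [CommRing A] [Algebra k A]

theorem coaction_eq_ρmap (B : HopfStruct k A) (ρ φ : A →ₗ[k] A ⊗[k] A)
    (h : IsHopfMatchedPair k A A B.Δ B.ε B.Δ B.ε ρ φ)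
    (hc : ∀ a, B.Δ a = LinearMap.mul' k (A ⊗[k] A) (TensorProduct.map ρ φ (B.Δ a))) :
    ρ = ρmap k A (Δfromρ k A B.Δ B.S ρ) B.Δ (Sfromρ k A B.S ρ) := by
  obtain ⟨-, hρ, -, hφ, -, -, hm, -, -⟩ := h
  let := B.pointGroup (A ⊗[k] A)
  have key := leftAction_eq_of_matchedPair (G := A →ₐ[k] A ⊗[k] A)
    (pointOp hρ.toAlgHom) (pointOp hφ.toAlgHom)
    (pointOp_of_HM2 (Δ' := B.comulHom) hm)
    (fun x y => by
      ext a
      refine (congrArg (productMap x y) (hc a)).trans ?_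
      exact (pointOp.apply_mul'_map _ _ _ (B.Δ a)).trans
        (pointOp.mul'_map (pointOp hρ.toAlgHom x y) (pointOp hφ.toAlgHom x y) (B.Δ a)))
    includeLeft includeRight
  have e₁ := Δfromρ_eq_pointOp B.comulHom hρ.toAlgHom B.antipodeHom
  have e₂ := Sfromρ_eq_pointOp hρ.toAlgHom B.antipodeHom
  have e₃ := ρmap_eq_pointOp
    (pointOp B.comulHom includeLeft
      (pointOp hρ.toAlgHom (includeLeft.comp B.antipodeHom) includeRight)) B.comulHom
    (pointOp hρ.toAlgHom (AlgHom.id k A) B.antipodeHom)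
  rw [← e₁, ← e₂] at e₃
  refine Eq.trans ?_ e₃.symm
  change hρ.toAlgHom.toLinearMap = _
  rw [pointOp.pointOp_pointOp, pointOp.comp_eq, AlgHom.comp_id]
  have hΔ : (includeLeft * includeRight : A →ₐ[k] A ⊗[k] A) = B.comulHom :=
    pointOp.includeLeft_includeRight B.comulHom
  rw [pointOp.includeLeft_includeRight, hΔ] at key
  exact congrArg AlgHom.toLinearMap key

theorem Δ_eq_Δfromρ_ρmap (HB : HopfBrace k A) :
    HB.fst.Δ = Δfromρ k A HB.snd.Δ HB.snd.S (ρmap k A HB.fst.Δ HB.snd.Δ HB.fst.S) := by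
  let := HB.fst.pointGroup (A ⊗[k] A)
  have key := mul_eq_of_skewBrace (G := A →ₐ[k] A ⊗[k] A) (pointOp HB.snd.comulHom)
    (fun x => x.comp HB.snd.antipodeHom)
    (letI := HB.snd.pointGroup (A ⊗[k] A)
     fun x y => mul_inv_cancel_left x y)
    (pointOp_of_brace (Δ := HB.fst.comulHom) (Δ' := HB.snd.comulHom) (S := HB.fst.antipodeHom)
      HB.compat)
    includeLeft includeRight
  have e₁ := ρmap_eq_pointOp HB.fst.comulHom HB.snd.comulHom HB.fst.antipodeHom
  have e₂ := Δfromρ_eq_pointOp HB.snd.comulHom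
    (pointOp HB.fst.comulHom (includeLeft.comp HB.fst.antipodeHom) HB.snd.comulHom)
    HB.snd.antipodeHom
  rw [← e₁, pointOp.pointOp_includeLeft] at e₂
  refine Eq.trans ?_ e₂.symm
  exact congrArg AlgHom.toLinearMap
    ((pointOp.includeLeft_includeRight HB.fst.comulHom).symm.trans key)

end Commutative

/-- the two constructions of Propositions 3.3 and 3.4 are
mutually inverse; cf. Theorem 3.5.
(a) In the situation of Proposition 3.4 (a commutative Hopf algebra `(A, Δ', ε)`
with antipode `T`, a Hopf matched pair `(A, A)` with coactions `ρ`, `φ`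
satisfying (3.1), and `Δ(a) = a_{1'} T(a_{2'(-1)}) ⊗ a_{2'(0)}`,
`S(a) = a_{(-1)} T(a_{(0)})`), the original coaction is recovered:
`ρ(a) = S(a_1) a_{21'} ⊗ a_{22'}`.
(b) Conversely, starting from a commutative Hopf brace `(A, Δ, Δ')` and forming
`ρ(a) = S(a_1) a_{21'} ⊗ a_{22'}`, the comultiplication reconstructed by
`a_{1'} T(a_{2'(-1)}) ⊗ a_{2'(0)}` equals `Δ`. -/
theorem matched_pair_brace_mutually_inverse {k : Type*} [Field k]
    {A : Type*} [Ring A] [Algebra k A] :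
    (∀ (B : HopfStruct k A), (∀ x y : A, x * y = y * x) →
      ∀ (ρ φ : A →ₗ[k] A ⊗[k] A),
        IsHopfMatchedPair k A A B.Δ B.ε B.Δ B.ε ρ φ →
        (∀ a : A,
          B.Δ a = LinearMap.mul' k (A ⊗[k] A) (TensorProduct.map ρ φ (B.Δ a))) →
        ∀ a : A,
          ρ a = ρmap k A (Δfromρ k A B.Δ B.S ρ) B.Δ (Sfromρ k A B.S ρ) a) ∧
    (∀ (HB : HopfBrace k A), (∀ x y : A, x * y = y * x) →
      ∀ a : A,
        HB.fst.Δ a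
          = Δfromρ k A HB.snd.Δ HB.snd.S
              (ρmap k A HB.fst.Δ HB.snd.Δ HB.fst.S) a) := by
  constructor
  · intro B hcomm ρ φ h hc a
    obtain ⟨_, rfl⟩ : ∃ C : CommRing A, C.toRing = ‹Ring A› :=
      ⟨{ ‹Ring A› with mul_comm := hcomm }, rfl⟩
    exact LinearMap.congr_fun (coaction_eq_ρmap B ρ φ h hc) a
  · intro HB hcomm a
    obtain ⟨_, rfl⟩ : ∃ C : CommRing A, C.toRing = ‹Ring A› :=
      ⟨{ ‹Ring A› with mul_comm := hcomm }, rfl⟩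
    exact LinearMap.congr_fun (Δ_eq_Δfromρ_ρmap HB) a

end HopfPaper
end
end

section
/- Let A be a Hopf algebra and (H, Δ, Δ') a commutative Hopf brace with antipode S for Δ. Suppose (A, H, ρ, φ) is a Hopf matched pair (with H carrying Δ), and (A, ρ') is a left H_{Δ'}-comodule bialgebra with coaction ρ'(a) = a_{(-1)'} ⊗ a_{(0)'}. Let A ⋈ H be the bicrossed coproduct of the matched pair, with comultiplication Δ̃, and let Δ̄ be the smash coproduct comultiplication on A ⊗ H_{Δ'}: Δ̄(a ⊗ h) = a_1 ⊗ a_{2(-1)'} h_{1'} ⊗ a_{2(0)'} ⊗ h_{2'}. Then (A ⋈ H, Δ̃, Δ̄) is a Hopf brace if and only if for all a ∈ A and h ∈ H: (4.2) a_{(-1)'} ⊗ a_{(0)'(-1)} ⊗ a_{(0)'(0)} = a_{(-1)11'} S(a_{(-1)2}) a_{(0)(-1)'} ⊗ a_{(-1)12'} ⊗ a_{(0)(0)'}, and (4.3) h_{1'} ⊗ h_{2'[0]} ⊗ h_{2'[1]} = h_{1[0]11'} S(h_{1[0]2}) h_{1[1](-1)'} h_2 ⊗ h_{1[0]12'} ⊗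 h_{1[1](0)'}. -/
open TensorProduct

noncomputable section

namespace HopfPaper

variable (k : Type*) [Field k]

section Convolution

variable {k : Type*} [Field k]

/-- The linear map `y ⊗ z ↦ f y * g z`. -/
def tmulMul {Y Z R : Type*} [AddCommGroup Y] [Module k Y] [AddCommGroup Z] [Module k Z]
    [Ring R] [Algebra k R] (f : Y →ₗ[k] R) (g : Z →ₗ[k] R) : Y ⊗[k] Z →ₗ[k] R :=
  (LinearMap.mul' k R).comp (TensorProduct.map f g)

/-- The convolution of `f` and `g` along `δ : X → Y ⊗ Z`. -/
def conv {X Y Z R : Type*} [AddCommGroup X] [Module k X] [AddCommGroup Y] [Module k Y]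
    [AddCommGroup Z] [Module k Z] [Ring R] [Algebra k R]
    (δ : X →ₗ[k] Y ⊗[k] Z) (f : Y →ₗ[k] R) (g : Z →ₗ[k] R) : X →ₗ[k] R :=
  (tmulMul f g).comp δ

/-- The linear map `x ↦ ε x • 1`. -/
def unitMap {X : Type*} [AddCommGroup X] [Module k X] (R : Type*) [Ring R] [Algebra k R]
    (ε : X →ₗ[k] k) : X →ₗ[k] R :=
  (Algebra.linearMap k R).comp ε

/-- The images of `f` and `g` commute elementwise. -/
def ImagesCommute {Y Z R : Type*} [AddCommGroup Y] [Module k Y] [AddCommGroup Z] [Module k Z]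
    [Ring R] [Algebra k R] (f : Y →ₗ[k] R) (g : Z →ₗ[k] R) : Prop :=
  ∀ y z, f y * g z = g z * f y

section Linear

variable {X Y Z W P Q R R' : Type*}
  [AddCommGroup X] [Module k X] [AddCommGroup Y] [Module k Y] [AddCommGroup Z] [Module k Z]
  [AddCommGroup W] [Module k W] [AddCommGroup P] [Module k P] [AddCommGroup Q] [Module k Q]
  [Ring R] [Algebra k R] [Ring R'] [Algebra k R']

@[simp]
theorem tmulMul_tmul (f : Y →ₗ[k] R) (g : Z →ₗ[k] R) (y : Y) (z : Z) :
    tmulMul f g (y ⊗ₜ z) = f y * g z := rfl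

theorem conv_apply (δ : X →ₗ[k] Y ⊗[k] Z) (f : Y →ₗ[k] R) (g : Z →ₗ[k] R) (x : X) :
    conv δ f g x = tmulMul f g (δ x) := rfl

@[simp]
theorem unitMap_apply (ε : X →ₗ[k] k) (x : X) : unitMap R ε x = algebraMap k R (ε x) := rfl

theorem ImagesCommute.symm {f : Y →ₗ[k] R} {g : Z →ₗ[k] R} (h : ImagesCommute f g) :
    ImagesCommute g f := fun y z => (h z y).symm

theorem ImagesCommute.comp_left {f : Y →ₗ[k] R} {g : Z →ₗ[k] R} (h : ImagesCommute f g)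
    (u : X →ₗ[k] Y) : ImagesCommute (f ∘ₗ u) g := fun x z => h (u x) z

theorem ImagesCommute.comp_right {f : Y →ₗ[k] R} {g : Z →ₗ[k] R} (h : ImagesCommute f g)
    (u : X →ₗ[k] Z) : ImagesCommute f (g ∘ₗ u) := fun x z => h x (u z)

theorem ImagesCommute.tmulMul_right {f : X →ₗ[k] R} {g : Y →ₗ[k] R} {h : Z →ₗ[k] R}
    (hg : ImagesCommute f g) (hh : ImagesCommute f h) : ImagesCommute f (tmulMul g h) := by
  intro x t
  induction t with
  | zero => simp
  | add s t hs ht => simp only [map_add, mul_add, add_mul, hs, ht]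
  | tmul y z => rw [tmulMul_tmul, ← mul_assoc, hg, mul_assoc, hh, mul_assoc]

theorem ImagesCommute.conv_right {f : W →ₗ[k] R} {g : Y →ₗ[k] R} {h : Z →ₗ[k] R}
    (hg : ImagesCommute f g) (hh : ImagesCommute f h) (δ : X →ₗ[k] Y ⊗[k] Z) :
    ImagesCommute f (conv δ g h) :=
  (hg.tmulMul_right hh).comp_right δ

theorem ImagesCommute.conv_left {f : W →ₗ[k] R} {g : Y →ₗ[k] R} {h : Z →ₗ[k] R}
    (hg : ImagesCommute g f) (hh : ImagesCommute h f) (δ : X →ₗ[k] Y ⊗[k] Z) :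
    ImagesCommute (conv δ g h) f :=
  (hg.symm.conv_right hh.symm δ).symm

theorem ImagesCommute.tmulMul_left {f : X →ₗ[k] R} {g : Y →ₗ[k] R} {h : Z →ₗ[k] R}
    (hf : ImagesCommute f h) (hg : ImagesCommute g h) : ImagesCommute (tmulMul f g) h :=
  (hf.symm.tmulMul_right hg.symm).symm

theorem ImagesCommute.unitMap_left (ε : Y →ₗ[k] k) (g : Z →ₗ[k] R) :
    ImagesCommute (unitMap R ε) g := fun y z => by
  simp [Algebra.commutes]

theorem ImagesCommute.unitMap_right (ε : Z →ₗ[k] k) (g : Y →ₗ[k] R) :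
    ImagesCommute g (unitMap R ε) := (ImagesCommute.unitMap_left ε g).symm

theorem tmulMul_map_id (δ : P →ₗ[k] Z ⊗[k] W) (f : Y →ₗ[k] R) (g : Z →ₗ[k] R) (h : W →ₗ[k] R)
    (t : Y ⊗[k] P) :
    tmulMul f (tmulMul g h) (TensorProduct.map LinearMap.id δ t) = tmulMul f (conv δ g h) t := by
  induction t with
  | zero => simp
  | add s t hs ht => simp only [map_add, hs, ht]
  | tmul y z => simp [conv_apply]

theorem tmulMul_assoc (f : Y →ₗ[k] R) (g : Z →ₗ[k] R) (h : W →ₗ[k] R) (t : (Y ⊗[k] Z) ⊗[k] W) :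
    tmulMul f (tmulMul g h) (TensorProduct.assoc k Y Z W t) = tmulMul (tmulMul f g) h t := by
  have : (tmulMul f (tmulMul g h)).comp (TensorProduct.assoc k Y Z W).toLinearMap
      = tmulMul (tmulMul f g) h := by
    ext; simp [mul_assoc]
  exact LinearMap.congr_fun this t

theorem tmulMul_map_left (δ : Q →ₗ[k] Y ⊗[k] Z) (f : Y →ₗ[k] R) (g : Z →ₗ[k] R) (h : W →ₗ[k] R)
    (t : Q ⊗[k] W) :
    tmulMul (tmulMul f g) h (TensorProduct.map δ LinearMap.id t) = tmulMul (conv δ f g) h t := by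
  induction t with
  | zero => simp
  | add s t hs ht => simp only [map_add, hs, ht]
  | tmul y z => simp [conv_apply]

theorem mul₃_map (f : Y →ₗ[k] R) (g : Z →ₗ[k] R) (h : W →ₗ[k] R) (t : Y ⊗[k] (Z ⊗[k] W)) :
    mul₃ k R (TensorProduct.map f (TensorProduct.map g h) t) = tmulMul f (tmulMul g h) t := by
  have : mul₃ k R ∘ₗ TensorProduct.map f (TensorProduct.map g h) = tmulMul f (tmulMul g h) := by
    ext; rfl
  exact LinearMap.congr_fun this t

theorem conv_assoc {δ₁ : X →ₗ[k] Y ⊗[k] P} {δ₂ : P →ₗ[k] Z ⊗[k] W} {δ₃ : X →ₗ[k] Q ⊗[k] W}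
    {δ₄ : Q →ₗ[k] Y ⊗[k] Z}
    (hδ : ∀ x, TensorProduct.map LinearMap.id δ₂ (δ₁ x)
      = TensorProduct.assoc k Y Z W (TensorProduct.map δ₄ LinearMap.id (δ₃ x)))
    (f : Y →ₗ[k] R) (g : Z →ₗ[k] R) (h : W →ₗ[k] R) :
    conv δ₁ f (conv δ₂ g h) = conv δ₃ (conv δ₄ f g) h := by
  ext x
  rw [conv_apply, ← tmulMul_map_id, hδ, tmulMul_assoc, tmulMul_map_left, conv_apply]

theorem conv_unitMap_left {δ : X →ₗ[k] Y ⊗[k] Z} {ε : Y →ₗ[k] k} (u : X →ₗ[k] Z)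
    (h : ∀ x, TensorProduct.lid k Z (TensorProduct.map ε LinearMap.id (δ x)) = u x)
    (g : Z →ₗ[k] R) : conv δ (unitMap R ε) g = g ∘ₗ u := by
  ext x
  rw [LinearMap.comp_apply, ← h, conv_apply]
  generalize δ x = t
  induction t with
  | zero => simp
  | add s t hs ht => simp only [map_add, hs, ht]
  | tmul y z => simp [Algebra.smul_def]

theorem conv_unitMap_right {δ : X →ₗ[k] Y ⊗[k] Z} {ε : Z →ₗ[k] k} (u : X →ₗ[k] Y)
    (h : ∀ x, TensorProduct.rid k Y (TensorProduct.map LinearMap.id ε (δ x)) = u x)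
    (f : Y →ₗ[k] R) : conv δ f (unitMap R ε) = f ∘ₗ u := by
  ext x
  rw [LinearMap.comp_apply, ← h, conv_apply]
  generalize δ x = t
  induction t with
  | zero => simp
  | add s t hs ht => simp only [map_add, hs, ht]
  | tmul y z => simp [Algebra.smul_def, Algebra.commutes]

end Linear

section Multiplicative

variable {X Y Z W R R' : Type*} [Ring X] [Algebra k X] [Ring Y] [Algebra k Y]
  [Ring Z] [Algebra k Z] [Ring W] [Algebra k W] [Ring R] [Algebra k R] [Ring R'] [Algebra k R']

theorem IsAlgebraMorphism.comp {f : Y →ₗ[k] R} {δ : X →ₗ[k] Y}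
    (hf : IsAlgebraMorphism k Y R f) (hδ : IsAlgebraMorphism k X Y δ) :
    IsAlgebraMorphism k X R (f ∘ₗ δ) :=
  ⟨fun a b => by simp [hδ.1, hf.1], by simp [hδ.2, hf.2]⟩

theorem IsAlgebraMorphism.map_algebraMap {f : Y →ₗ[k] R} (hf : IsAlgebraMorphism k Y R f) (c : k) :
    f (algebraMap k Y c) = algebraMap k R c := by
  simp [Algebra.algebraMap_eq_smul_one, hf.2]

theorem isAlgebraMorphism_ι₁ : IsAlgebraMorphism k Y (Y ⊗[k] Z) (ι₁ k Y Z) :=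
  ⟨fun a b => by simp [ι₁], by simp [ι₁, Algebra.TensorProduct.one_def]⟩

theorem isAlgebraMorphism_ι₂ : IsAlgebraMorphism k Z (Y ⊗[k] Z) (ι₂ k Y Z) :=
  ⟨fun a b => by simp [ι₂], by simp [ι₂, Algebra.TensorProduct.one_def]⟩

theorem IsAlgebraMorphism.tmulMul {f : Y →ₗ[k] R} {g : Z →ₗ[k] R}
    (hf : IsAlgebraMorphism k Y R f) (hg : IsAlgebraMorphism k Z R g) (h : ImagesCommute f g) :
    IsAlgebraMorphism k (Y ⊗[k] Z) R (tmulMul f g) := by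
  refine ⟨fun s t => ?_, by simp [Algebra.TensorProduct.one_def, hf.2, hg.2]⟩
  induction s with
  | zero => simp
  | add s₁ s₂ h₁ h₂ => simp only [map_add, add_mul, h₁, h₂]
  | tmul y z =>
    induction t with
    | zero => simp
    | add s₁ s₂ h₁ h₂ => simp only [map_add, mul_add, h₁, h₂]
    | tmul y' z' =>
      simp only [Algebra.TensorProduct.tmul_mul_tmul, tmulMul_tmul, hf.1, hg.1]
      rw [mul_assoc, ← mul_assoc (f y'), h, mul_assoc, mul_assoc]

theorem IsAlgebraMorphism.conv {δ : X →ₗ[k] Y ⊗[k] Z} {f : Y →ₗ[k] R} {g : Z →ₗ[k] R}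
    (hδ : IsAlgebraMorphism k X (Y ⊗[k] Z) δ)
    (hf : IsAlgebraMorphism k Y R f) (hg : IsAlgebraMorphism k Z R g) (h : ImagesCommute f g) :
    IsAlgebraMorphism k X R (conv δ f g) :=
  (hf.tmulMul hg h).comp hδ

theorem conv_one {δ : X →ₗ[k] Y ⊗[k] Z} {f : Y →ₗ[k] R} {g : Z →ₗ[k] R} (hδ : δ 1 = 1)
    (hf : f 1 = 1) (hg : g 1 = 1) : HopfPaper.conv δ f g 1 = 1 := by
  rw [conv_apply, hδ, Algebra.TensorProduct.one_def, tmulMul_tmul, hf, hg, mul_one]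

theorem IsAlgebraMorphism.comp_conv {V V' V'' : Type*} [AddCommGroup V] [Module k V]
    [AddCommGroup V'] [Module k V'] [AddCommGroup V''] [Module k V'']
    {F : R →ₗ[k] R'} (hF : IsAlgebraMorphism k R R' F) (δ : V →ₗ[k] V' ⊗[k] V'')
    (f : V' →ₗ[k] R) (g : V'' →ₗ[k] R) :
    F ∘ₗ HopfPaper.conv δ f g = HopfPaper.conv δ (F ∘ₗ f) (F ∘ₗ g) := by
  ext x
  simp only [LinearMap.comp_apply, conv_apply]
  generalize δ x = t
  induction t with
  | zero => simp
  | add s t hs ht => simp only [map_add, hs, ht]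
  | tmul y z => simp [hF.1]

theorem tmulMul_comp_map_ι₁ {f : X →ₗ[k] R} {g : Y →ₗ[k] R} {h : Z →ₗ[k] R} (hh : h 1 = 1)
    {V : Type*} [AddCommGroup V] [Module k V] (δ : V →ₗ[k] X ⊗[k] Y) :
    tmulMul f (tmulMul g h) ∘ₗ TensorProduct.map LinearMap.id (ι₁ k Y Z) ∘ₗ δ = conv δ f g := by
  ext v
  simp only [LinearMap.comp_apply, conv_apply]
  generalize δ v = t
  induction t with
  | zero => simp
  | add s t hs ht => simp only [map_add, hs, ht]
  | tmul y z => simp [ι₁, hh]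

theorem tmulMul_comp_map_ι₂ {f : X →ₗ[k] R} {g : Y →ₗ[k] R} {h : Z →ₗ[k] R} (hg : g 1 = 1)
    {V : Type*} [AddCommGroup V] [Module k V] (δ : V →ₗ[k] X ⊗[k] Z) :
    tmulMul f (tmulMul g h) ∘ₗ TensorProduct.map LinearMap.id (ι₂ k Y Z) ∘ₗ δ = conv δ f h := by
  ext v
  simp only [LinearMap.comp_apply, conv_apply]
  generalize δ v = t
  induction t with
  | zero => simp
  | add s t hs ht => simp only [map_add, hs, ht]
  | tmul y z => simp [ι₂, hg]

theorem tmulMul_comp_ι₁ {f : Y →ₗ[k] R} {g : Z →ₗ[k] R} (hg : g 1 = 1) :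
    tmulMul f g ∘ₗ ι₁ k Y Z = f := by
  ext y; simp [ι₁, hg]

theorem tmulMul_comp_ι₂ {f : Y →ₗ[k] R} {g : Z →ₗ[k] R} (hf : f 1 = 1) :
    tmulMul f g ∘ₗ ι₂ k Y Z = g := by
  ext y; simp [ι₂, hf]

theorem conv_ι₁ {f : Y →ₗ[k] R} {g : Z →ₗ[k] R} (hg : g 1 = 1) : conv (ι₁ k Y Z) f g = f :=
  tmulMul_comp_ι₁ hg

theorem IsAlgebraMorphism.eq_tmulMul {f : Y ⊗[k] Z →ₗ[k] R}
    (hf : IsAlgebraMorphism k (Y ⊗[k] Z) R f) :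
    f = HopfPaper.tmulMul (f ∘ₗ ι₁ k Y Z) (f ∘ₗ ι₂ k Y Z) := by
  ext y z; simp [ι₁, ι₂, ← hf.1]

theorem tmulMul_inj {f f' : Y →ₗ[k] R} {g g' : Z →ₗ[k] R} (hf : f 1 = 1) (hf' : f' 1 = 1)
    (hg : g 1 = 1) (hg' : g' 1 = 1) : tmulMul f g = tmulMul f' g' ↔ f = f' ∧ g = g' := by
  refine ⟨fun h => ⟨?_, ?_⟩, fun h => by rw [h.1, h.2]⟩
  · simpa only [tmulMul_comp_ι₁ hg, tmulMul_comp_ι₁ hg'] using congrArg (· ∘ₗ ι₁ k Y Z) h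
  · simpa only [tmulMul_comp_ι₂ hf, tmulMul_comp_ι₂ hf'] using congrArg (· ∘ₗ ι₂ k Y Z) h

end Multiplicative

end Convolution

section Identities

variable {k : Type*} [Field k] {A H R : Type*} [Ring A] [Algebra k A] [Ring H] [Algebra k H]
  [Ring R] [Algebra k R]

theorem conv_braceRHS {ΔH Δ'H : H →ₗ[k] H ⊗[k] H} {S : H →ₗ[k] H} {f g h : H →ₗ[k] R}
    (hf : IsAlgebraMorphism k H R f) (hg : IsAlgebraMorphism k H R g)
    (hh : IsAlgebraMorphism k H R h) (hfg : ImagesCommute f g) (hfh : ImagesCommute f h)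
    (hgh : ImagesCommute g h) :
    tmulMul f (tmulMul g h) ∘ₗ braceRHS k H ΔH Δ'H S
      = conv ΔH (conv Δ'H f g) (conv ΔH (f ∘ₗ S) (conv Δ'H f h)) := by
  have hF := hf.tmulMul (hg.tmulMul hh hgh) (hfg.tmulMul_right hfh)
  have key : braceRHS k H ΔH Δ'H S
      = conv ΔH (TensorProduct.map LinearMap.id (ι₁ k H H) ∘ₗ Δ'H)
          (conv ΔH (ι₁ k H (H ⊗[k] H) ∘ₗ S)
            (TensorProduct.map LinearMap.id (ι₂ k H H) ∘ₗ Δ'H)) := by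
    ext x
    simp only [braceRHS, LinearMap.comp_apply]
    rw [mul₃_map, tmulMul_map_id, conv_apply]
  rw [key, hF.comp_conv, hF.comp_conv, tmulMul_comp_map_ι₁ hh.2, tmulMul_comp_map_ι₂ hg.2,
    ← LinearMap.comp_assoc, tmulMul_comp_ι₁ (hg.tmulMul hh hgh).2]

theorem comp_comodCoalgRHS {ΔA : A →ₗ[k] A ⊗[k] A} {ρ : A →ₗ[k] H ⊗[k] A}
    {f : H →ₗ[k] R} {g h : A →ₗ[k] R}
    (hf : IsAlgebraMorphism k H R f) (hg : IsAlgebraMorphism k A R g)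
    (hh : IsAlgebraMorphism k A R h) (hfg : ImagesCommute f g) (hfh : ImagesCommute f h)
    (hgh : ImagesCommute g h) :
    tmulMul f (tmulMul g h) ∘ₗ comodCoalgRHS k A H ΔA ρ
      = conv ΔA (conv ρ f g) (conv ρ f h) := by
  have hF := hf.tmulMul (hg.tmulMul hh hgh) (hfg.tmulMul_right hfh)
  have key : comodCoalgRHS k A H ΔA ρ
      = conv ΔA (TensorProduct.map LinearMap.id (ι₁ k A A) ∘ₗ ρ)
          (TensorProduct.map LinearMap.id (ι₂ k A A) ∘ₗ ρ) := rfl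
  rw [key, hF.comp_conv, tmulMul_comp_map_ι₁ hh.2, tmulMul_comp_map_ι₂ hg.2]

theorem comp_HM2RHS {ΔA : A →ₗ[k] A ⊗[k] A} {ρ : A →ₗ[k] H ⊗[k] A} {φ : H →ₗ[k] H ⊗[k] A}
    {f : H →ₗ[k] R} {g h : A →ₗ[k] R}
    (hf : IsAlgebraMorphism k H R f) (hg : IsAlgebraMorphism k A R g)
    (hh : IsAlgebraMorphism k A R h) (hfg : ImagesCommute f g) (hfh : ImagesCommute f h)
    (hgh : ImagesCommute g h) :
    tmulMul f (tmulMul g h) ∘ₗ HM2RHS k A H ΔA ρ φ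
      = conv ΔA (conv ρ f g) (conv ρ (conv φ f g) h) := by
  have hF := hf.tmulMul (hg.tmulMul hh hgh) (hfg.tmulMul_right hfh)
  have key : HM2RHS k A H ΔA ρ φ
      = conv ΔA (TensorProduct.map LinearMap.id (ι₁ k A A) ∘ₗ ρ)
          ((TensorProduct.assoc k H A A).toLinearMap ∘ₗ TensorProduct.map φ LinearMap.id ∘ₗ ρ) :=
    rfl
  rw [key, hF.comp_conv, tmulMul_comp_map_ι₁ hh.2]
  congr 1
  ext a
  simp only [LinearMap.comp_apply, LinearEquiv.coe_coe]
  rw [tmulMul_assoc, tmulMul_map_left, conv_apply]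

theorem comp_HM3RHS {ΔH : H →ₗ[k] H ⊗[k] H} {ρ : A →ₗ[k] H ⊗[k] A} {φ : H →ₗ[k] H ⊗[k] A}
    {f g : H →ₗ[k] R} {h : A →ₗ[k] R}
    (hf : IsAlgebraMorphism k H R f) (hg : IsAlgebraMorphism k H R g)
    (hh : IsAlgebraMorphism k A R h) (hfg : ImagesCommute f g) (hfh : ImagesCommute f h)
    (hgh : ImagesCommute g h) :
    tmulMul f (tmulMul g h) ∘ₗ HM3RHS k A H ΔH ρ φ
      = conv ΔH (conv φ f (conv ρ g h)) (conv φ g h) := by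
  have hF := hf.tmulMul (hg.tmulMul hh hgh) (hfg.tmulMul_right hfh)
  have key : HM3RHS k A H ΔH ρ φ
      = conv ΔH (TensorProduct.map LinearMap.id ρ ∘ₗ φ) (ι₂ k H (H ⊗[k] A) ∘ₗ φ) := rfl
  rw [key, hF.comp_conv]
  congr 1
  · ext a
    simp only [LinearMap.comp_apply]
    rw [tmulMul_map_id, conv_apply]
  · ext a
    exact LinearMap.congr_fun (tmulMul_comp_ι₂ hf.2) (φ a)

theorem comp_LHmap {ΔH Δ'H : H →ₗ[k] H ⊗[k] H} {S : H →ₗ[k] H}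
    {f g : H →ₗ[k] R} {h : A →ₗ[k] R}
    (hf : IsAlgebraMorphism k H R f) (hg : IsAlgebraMorphism k H R g)
    (hh : IsAlgebraMorphism k A R h) (hfg : ImagesCommute f g) (hfh : ImagesCommute f h)
    (hgh : ImagesCommute g h) :
    tmulMul f (tmulMul g h) ∘ₗ LHmap k A H ΔH Δ'H S = conv ΔH (conv Δ'H f g) (f ∘ₗ S) := by
  have hF := hf.tmulMul (hg.tmulMul hh hgh) (hfg.tmulMul_right hfh)
  have key : LHmap k A H ΔH Δ'H S
      = conv ΔH (TensorProduct.map LinearMap.id (ι₁ k H A) ∘ₗ Δ'H) (ι₁ k H (H ⊗[k] A) ∘ₗ S) :=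
    rfl
  rw [key, hF.comp_conv, tmulMul_comp_map_ι₁ hh.2, ← LinearMap.comp_assoc,
    tmulMul_comp_ι₁ (hg.tmulMul hh hgh).2]

theorem comp_eq42RHS {ΔH Δ'H : H →ₗ[k] H ⊗[k] H} {S : H →ₗ[k] H} {ρ ρ' : A →ₗ[k] H ⊗[k] A}
    {f g : H →ₗ[k] R} {h : A →ₗ[k] R}
    (hf : IsAlgebraMorphism k H R f) (hg : IsAlgebraMorphism k H R g)
    (hh : IsAlgebraMorphism k A R h) (hfg : ImagesCommute f g) (hfh : ImagesCommute f h)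
    (hgh : ImagesCommute g h) :
    tmulMul f (tmulMul g h) ∘ₗ eq42RHS k A H ΔH Δ'H S ρ ρ'
      = conv ρ (conv ΔH (conv Δ'H f g) (f ∘ₗ S)) (conv ρ' f h) := by
  have hF := hf.tmulMul (hg.tmulMul hh hgh) (hfg.tmulMul_right hfh)
  have key : eq42RHS k A H ΔH Δ'H S ρ ρ'
      = conv ρ (LHmap k A H ΔH Δ'H S) (TensorProduct.map LinearMap.id (ι₂ k H A) ∘ₗ ρ') := rfl
  rw [key, hF.comp_conv, tmulMul_comp_map_ι₂ hg.2, comp_LHmap hf hg hh hfg hfh hgh]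

theorem comp_eq43RHS {ΔH Δ'H : H →ₗ[k] H ⊗[k] H} {S : H →ₗ[k] H} {ρ' : A →ₗ[k] H ⊗[k] A}
    {φ : H →ₗ[k] H ⊗[k] A} {f g : H →ₗ[k] R} {h : A →ₗ[k] R}
    (hf : IsAlgebraMorphism k H R f) (hg : IsAlgebraMorphism k H R g)
    (hh : IsAlgebraMorphism k A R h) (hfg : ImagesCommute f g) (hfh : ImagesCommute f h)
    (hgh : ImagesCommute g h) :
    tmulMul f (tmulMul g h) ∘ₗ eq43RHS k A H ΔH Δ'H S ρ' φ
      = conv ΔH (conv φ (conv ΔH (conv Δ'H f g) (f ∘ₗ S)) (conv ρ' f h)) f := by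
  have hF := hf.tmulMul (hg.tmulMul hh hgh) (hfg.tmulMul_right hfh)
  have key : eq43RHS k A H ΔH Δ'H S ρ' φ
      = conv ΔH (conv φ (LHmap k A H ΔH Δ'H S)
          (TensorProduct.map LinearMap.id (ι₂ k H A) ∘ₗ ρ')) (ι₁ k H (H ⊗[k] A)) := rfl
  rw [key, hF.comp_conv, hF.comp_conv, tmulMul_comp_map_ι₂ hg.2,
    comp_LHmap hf hg hh hfg hfh hgh, tmulMul_comp_ι₁ (hg.tmulMul hh hgh).2]

/-- Convolution along a bicrossed coproduct of maps split as products. -/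
theorem conv_bicrossΔ {ΔA : A →ₗ[k] A ⊗[k] A} {ΔH : H →ₗ[k] H ⊗[k] H}
    {ρ : A →ₗ[k] H ⊗[k] A} {φ : H →ₗ[k] H ⊗[k] A} {fA gA : A →ₗ[k] R} {fH gH : H →ₗ[k] R}
    (hfH : IsAlgebraMorphism k H R fH) (hgA : IsAlgebraMorphism k A R gA)
    (hHA : ImagesCommute fH gA) :
    conv (bicrossΔ k A H ΔA ΔH ρ φ) (tmulMul fA fH) (tmulMul gA gH)
      = tmulMul (conv ΔA fA (conv ρ fH gA)) (conv ΔH (conv φ fH gA) gH) := by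
  have key : tmulMul (tmulMul fA fH) (tmulMul gA gH) ∘ₗ
      tmulMul (TensorProduct.map LinearMap.id (ι₁ k A H) ∘ₗ
          (TensorProduct.assoc k A H A).symm.toLinearMap)
        (TensorProduct.map (ι₂ k A H) LinearMap.id ∘ₗ (TensorProduct.assoc k H A H).toLinearMap)
      = tmulMul (tmulMul fA (tmulMul fH gA)) (tmulMul (tmulMul fH gA) gH) := by
    ext a x b y c z
    simp only [ι₁, ι₂, TensorProduct.AlgebraTensorModule.curry_apply, TensorProduct.curry_apply,
      LinearMap.comp_apply, LinearMap.restrictScalars_self, TensorProduct.map_tmul, tmulMul_tmul,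
      LinearEquiv.coe_coe, TensorProduct.assoc_tmul, TensorProduct.assoc_symm_tmul,
      LinearMap.flip_apply, TensorProduct.mk_apply, LinearMap.id_apply,
      Algebra.TensorProduct.tmul_mul_tmul, mul_one, one_mul,
      hfH.1, hgA.1, mul_assoc]
    rw [← mul_assoc (fH y), hHA]
    simp only [mul_assoc]
  ext a h
  refine Eq.trans (LinearMap.congr_fun key
    (TensorProduct.map LinearMap.id ρ (ΔA a) ⊗ₜ TensorProduct.map φ LinearMap.id (ΔH h))) ?_
  rw [tmulMul_tmul, tmulMul_map_id, tmulMul_map_left]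
  rfl

end Identities

section Antipode

variable {k : Type*} [Field k] {H : Type*} [Ring H] [Algebra k H]

/-- The Mathlib Hopf algebra attached to a `HopfStruct`. -/
abbrev HopfStruct.toHopfAlgebra_s18 (s : HopfStruct k H) : HopfAlgebra k H where
  comul := s.Δ
  counit := s.ε
  coassoc := LinearMap.ext fun h => (s.coassoc h).symm
  rTensor_counit_comp_comul := LinearMap.ext fun h =>
    (TensorProduct.lid k H).injective ((s.counit_left h).trans (by simp))
  lTensor_counit_comp_comul := LinearMap.ext fun h =>
    (TensorProduct.rid k H).injective ((s.counit_right h).trans (by simp))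
  counit_one := s.counit_one
  mul_compr₂_counit := LinearMap.ext₂ s.counit_mul
  comul_one := s.comul_one
  mul_compr₂_comul := LinearMap.ext₂ s.comul_mul
  antipode := s.S
  mul_antipode_rTensor_comul := LinearMap.ext s.antipode_left
  mul_antipode_lTensor_comul := LinearMap.ext s.antipode_right

theorem HopfStruct.S_mul (s : HopfStruct k H) (x y : H) : s.S (x * y) = s.S y * s.S x :=
  letI := s.toHopfAlgebra_s18
  HopfAlgebra.antipode_mul_antidistrib (R := k) x y

theorem HopfStruct.S_one (s : HopfStruct k H) : s.S 1 = 1 :=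
  letI := s.toHopfAlgebra_s18
  HopfAlgebra.antipode_one (R := k)

variable {R : Type*} [Ring R] [Algebra k R]

theorem HopfStruct.conv_comp_S_left (s : HopfStruct k H) {f : H →ₗ[k] R}
    (hf : IsAlgebraMorphism k H R f) : conv s.Δ (f ∘ₗ s.S) f = unitMap R s.ε := by
  have := hf.comp_conv s.Δ s.S LinearMap.id
  rw [LinearMap.comp_id] at this
  rw [← this]
  ext x
  rw [LinearMap.comp_apply, show conv s.Δ s.S LinearMap.id x = _ from s.antipode_left x,
    hf.map_algebraMap, unitMap_apply]

theorem HopfStruct.conv_comp_S_right (s : HopfStruct k H) {f : H →ₗ[k] R}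
    (hf : IsAlgebraMorphism k H R f) : conv s.Δ f (f ∘ₗ s.S) = unitMap R s.ε := by
  have := hf.comp_conv s.Δ LinearMap.id s.S
  rw [LinearMap.comp_id] at this
  rw [← this]
  ext x
  rw [LinearMap.comp_apply, show conv s.Δ LinearMap.id s.S x = _ from s.antipode_right x,
    hf.map_algebraMap, unitMap_apply]

theorem HopfStruct.unitMap_conv (s : HopfStruct k H) (f : H →ₗ[k] R) :
    conv s.Δ (unitMap R s.ε) f = f :=
  conv_unitMap_left LinearMap.id s.counit_left f

theorem HopfStruct.conv_unitMap (s : HopfStruct k H) (f : H →ₗ[k] R) :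
    conv s.Δ f (unitMap R s.ε) = f :=
  conv_unitMap_right LinearMap.id s.counit_right f

theorem HopfStruct.conv_left_inj (s : HopfStruct k H) {p f g : H →ₗ[k] R}
    (hp : IsAlgebraMorphism k H R p) : conv s.Δ p f = conv s.Δ p g ↔ f = g := by
  refine ⟨fun h => ?_, fun h => h ▸ rfl⟩
  rw [← s.unitMap_conv f, ← s.unitMap_conv g, ← s.conv_comp_S_left hp,
    ← conv_assoc s.coassoc, ← conv_assoc s.coassoc, h]

theorem HopfStruct.conv_right_inj (s : HopfStruct k H) {p f g : H →ₗ[k] R}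
    (hp : IsAlgebraMorphism k H R p) : conv s.Δ f p = conv s.Δ g p ↔ f = g := by
  refine ⟨fun h => ?_, fun h => h ▸ rfl⟩
  rw [← s.conv_unitMap f, ← s.conv_unitMap g, ← s.conv_comp_S_right hp,
    conv_assoc s.coassoc, conv_assoc s.coassoc, h]

theorem HopfStruct.isAlgebraMorphism_Δ (s : HopfStruct k H) :
    IsAlgebraMorphism k H (H ⊗[k] H) s.Δ := ⟨s.comul_mul, s.comul_one⟩

theorem HopfStruct.isAlgebraMorphism_S (s : HopfStruct k H) (hc : ∀ x y : H, x * y = y * x) :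
    IsAlgebraMorphism k H H s.S := ⟨fun x y => by rw [s.S_mul, hc], s.S_one⟩

theorem HopfStruct.isAlgebraMorphism_unitMap (s : HopfStruct k H) :
    IsAlgebraMorphism k H R (unitMap R s.ε) :=
  ⟨fun x y => by simp [s.counit_mul], by simp [s.counit_one]⟩

end Antipode

section Bicrossed

variable {k : Type*} [Field k] {A H : Type*} [Ring A] [Algebra k A] [Ring H] [Algebra k H]
  {sA : HopfStruct k A} {sH : HopfStruct k H} {ρ : A →ₗ[k] H ⊗[k] A} {φ : H →ₗ[k] H ⊗[k] A}

variable {R : Type*} [Ring R] [Algebra k R]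

theorem IsHopfMatchedPair.conv_ρ_conv
    (hmp : IsHopfMatchedPair k A H sA.Δ sA.ε sH.Δ sH.ε ρ φ) {f : H →ₗ[k] R} {g h : A →ₗ[k] R}
    (hf : IsAlgebraMorphism k H R f) (hg : IsAlgebraMorphism k A R g)
    (hh : IsAlgebraMorphism k A R h) (hfg : ImagesCommute f g) (hfh : ImagesCommute f h)
    (hgh : ImagesCommute g h) :
    conv ρ f (conv sA.Δ g h) = conv sA.Δ (conv ρ f g) (conv ρ (conv φ f g) h) := by
  rw [← comp_HM2RHS hf hg hh hfg hfh hgh]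
  ext a
  rw [LinearMap.comp_apply, ← hmp.2.2.2.2.2.2.1, tmulMul_map_id, conv_apply]

theorem IsHopfMatchedPair.conv_φ_conv
    (hmp : IsHopfMatchedPair k A H sA.Δ sA.ε sH.Δ sH.ε ρ φ) {f g : H →ₗ[k] R} {h : A →ₗ[k] R}
    (hf : IsAlgebraMorphism k H R f) (hg : IsAlgebraMorphism k H R g)
    (hh : IsAlgebraMorphism k A R h) (hfg : ImagesCommute f g) (hfh : ImagesCommute f h)
    (hgh : ImagesCommute g h) :
    conv φ (conv sH.Δ f g) h = conv sH.Δ (conv φ f (conv ρ g h)) (conv φ g h) := by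
  rw [← comp_HM3RHS hf hg hh hfg hfh hgh]
  ext a
  rw [LinearMap.comp_apply, ← hmp.2.2.2.2.2.2.2.1, tmulMul_assoc, tmulMul_map_left, conv_apply]

theorem IsHopfMatchedPair.unitMap_conv_ρ
    (hmp : IsHopfMatchedPair k A H sA.Δ sA.ε sH.Δ sH.ε ρ φ) (g : A →ₗ[k] R) :
    conv ρ (unitMap R sH.ε) g = g :=
  conv_unitMap_left LinearMap.id hmp.1.2 g

theorem IsHopfMatchedPair.unitMap_conv_φ
    (hmp : IsHopfMatchedPair k A H sA.Δ sA.ε sH.Δ sH.ε ρ φ) {g : A →ₗ[k] R}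
    (hg : IsAlgebraMorphism k A R g) :
    conv φ (unitMap R sH.ε) g = unitMap R sH.ε := by
  rw [conv_unitMap_left (Algebra.linearMap k A ∘ₗ sH.ε) hmp.2.2.2.2.2.1 g]
  ext h
  simp [hg.map_algebraMap]

/-- A coaction by `sH` allows cancelling multiplicative maps on the left. -/
theorem IsHopfMatchedPair.conv_ρ_inj
    (hmp : IsHopfMatchedPair k A H sA.Δ sA.ε sH.Δ sH.ε ρ φ) {p : H →ₗ[k] R} {f g : A →ₗ[k] R}
    (hp : IsAlgebraMorphism k H R p) : conv ρ p f = conv ρ p g ↔ f = g := by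
  refine ⟨fun h => ?_, fun h => h ▸ rfl⟩
  rw [← hmp.unitMap_conv_ρ f, ← hmp.unitMap_conv_ρ g, ← sH.conv_comp_S_left hp,
    ← conv_assoc hmp.1.1, ← conv_assoc hmp.1.1, h]

theorem IsHopfMatchedPair.conv_bicrossΔ_conv
    (hmp : IsHopfMatchedPair k A H sA.Δ sA.ε sH.Δ sH.ε ρ φ)
    {α₁ α₂ α₃ : A →ₗ[k] R} {η₁ η₂ η₃ : H →ₗ[k] R}
    (hη₁ : IsAlgebraMorphism k H R η₁) (hη₂ : IsAlgebraMorphism k H R η₂)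
    (hα₂ : IsAlgebraMorphism k A R α₂) (hα₃ : IsAlgebraMorphism k A R α₃)
    (c₁ : ImagesCommute η₁ α₂) (c₂ : ImagesCommute η₁ η₂) (c₃ : ImagesCommute η₁ α₃)
    (c₄ : ImagesCommute η₂ α₃) (c₅ : ImagesCommute α₂ η₂) (c₆ : ImagesCommute α₂ α₃) :
    conv (bicrossΔ k A H sA.Δ sH.Δ ρ φ) (tmulMul α₁ η₁)
        (conv (bicrossΔ k A H sA.Δ sH.Δ ρ φ) (tmulMul α₂ η₂) (tmulMul α₃ η₃))
      = conv (bicrossΔ k A H sA.Δ sH.Δ ρ φ)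
          (conv (bicrossΔ k A H sA.Δ sH.Δ ρ φ) (tmulMul α₁ η₁) (tmulMul α₂ η₂))
          (tmulMul α₃ η₃) := by
  have hκ := hmp.2.1.conv hη₂ hα₃ c₄
  have c₁κ := c₂.conv_right c₃ ρ
  have c₂κ := c₅.conv_right c₆ ρ
  have hμ := hmp.2.2.2.1.conv hη₁ hα₂ c₁
  have cμ₂ := c₂.conv_left c₅ φ
  have cμ₃ := c₃.conv_left c₆ φ
  rw [conv_bicrossΔ hη₂ hα₃ c₄,
    conv_bicrossΔ hη₁ (sA.isAlgebraMorphism_Δ.conv hα₂ hκ c₂κ) (c₁.conv_right c₁κ _),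
    conv_bicrossΔ hη₁ hα₂ c₁,
    conv_bicrossΔ (sH.isAlgebraMorphism_Δ.conv hμ hη₂ cμ₂) hα₃ (cμ₃.conv_left c₄ _)]
  congr 1
  · rw [hmp.conv_ρ_conv hη₁ hα₂ hκ c₁ c₁κ c₂κ, conv_assoc sA.coassoc, conv_assoc hmp.1.1]
  · rw [conv_assoc sH.coassoc, conv_assoc hmp.2.2.1.1, hmp.conv_φ_conv hμ hη₂ hα₃ cμ₂ cμ₃ c₄]

theorem IsHopfMatchedPair.unitMap_conv_bicrossΔ
    (hmp : IsHopfMatchedPair k A H sA.Δ sA.ε sH.Δ sH.ε ρ φ)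
    {α : A →ₗ[k] R} {η : H →ₗ[k] R} (hα : IsAlgebraMorphism k A R α) :
    conv (bicrossΔ k A H sA.Δ sH.Δ ρ φ) (tmulMul (unitMap R sA.ε) (unitMap R sH.ε)) (tmulMul α η)
      = tmulMul α η := by
  rw [conv_bicrossΔ sH.isAlgebraMorphism_unitMap hα (.unitMap_left _ _), hmp.unitMap_conv_ρ,
    hmp.unitMap_conv_φ hα, sA.unitMap_conv, sH.unitMap_conv]

end Bicrossed

section Legs

variable {k : Type*} [Field k]

theorem ImagesCommute.map {V V' R R' : Type*} [AddCommGroup V] [Module k V] [AddCommGroup V']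
    [Module k V'] [Ring R] [Algebra k R] [Ring R'] [Algebra k R'] {f : V →ₗ[k] R} {g : V' →ₗ[k] R}
    (h : ImagesCommute f g) {F : R →ₗ[k] R'} (hF : IsAlgebraMorphism k R R' F) :
    ImagesCommute (F ∘ₗ f) (F ∘ₗ g) := fun y z => by
  rw [LinearMap.comp_apply, LinearMap.comp_apply, ← hF.1, h, hF.1]

variable {X Y Z : Type*} [Ring X] [Algebra k X] [Ring Y] [Algebra k Y] [Ring Z] [Algebra k Z]

theorem imagesCommute_ι : ImagesCommute (ι₁ k Y Z) (ι₂ k Y Z) := fun y z => by simp [ι₁, ι₂]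

theorem tmulMul_legs :
    tmulMul (ι₁ k X (Y ⊗[k] Z))
      (tmulMul (ι₂ k X (Y ⊗[k] Z) ∘ₗ ι₁ k Y Z) (ι₂ k X (Y ⊗[k] Z) ∘ₗ ι₂ k Y Z))
      = LinearMap.id := by
  ext x y z
  simp [ι₁, ι₂]

end Legs

section BicrossedHopf

variable {k : Type*} [Field k] {A H : Type*} [Ring A] [Algebra k A] [Ring H] [Algebra k H]
  {sA : HopfStruct k A} {sH : HopfStruct k H} {ρ : A →ₗ[k] H ⊗[k] A} {φ : H →ₗ[k] H ⊗[k] A}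

/-- The bicrossed coproduct comultiplication of a Hopf matched pair is coassociative. -/
theorem IsHopfMatchedPair.bicrossΔ_coassoc
    (hmp : IsHopfMatchedPair k A H sA.Δ sA.ε sH.Δ sH.ε ρ φ) (w : A ⊗[k] H) :
    TensorProduct.map LinearMap.id (bicrossΔ k A H sA.Δ sH.Δ ρ φ)
        (bicrossΔ k A H sA.Δ sH.Δ ρ φ w)
      = TensorProduct.assoc k _ _ _ (TensorProduct.map (bicrossΔ k A H sA.Δ sH.Δ ρ φ)
          LinearMap.id (bicrossΔ k A H sA.Δ sH.Δ ρ φ w)) := by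
  rw [← LinearMap.id_apply (R := k) (TensorProduct.map _ _ _),
    ← LinearMap.id_apply (R := k) (TensorProduct.assoc k _ _ _ _), ← tmulMul_legs,
    tmulMul_map_id, tmulMul_assoc, tmulMul_map_left]
  have hi₁ := isAlgebraMorphism_ι₁ (k := k) (Y := A ⊗[k] H) (Z := (A ⊗[k] H) ⊗[k] (A ⊗[k] H))
  have hi := isAlgebraMorphism_ι₂ (k := k) (Y := A ⊗[k] H) (Z := (A ⊗[k] H) ⊗[k] (A ⊗[k] H))
  have hi₂ := hi.comp (isAlgebraMorphism_ι₁ (k := k) (Y := A ⊗[k] H) (Z := A ⊗[k] H))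
  have hi₃ := hi.comp (isAlgebraMorphism_ι₂ (k := k) (Y := A ⊗[k] H) (Z := A ⊗[k] H))
  have c := imagesCommute_ι (k := k) (Y := A ⊗[k] H) (Z := (A ⊗[k] H) ⊗[k] (A ⊗[k] H))
  have c₁₂ := c.comp_right (ι₁ k (A ⊗[k] H) (A ⊗[k] H))
  have c₁₃ := c.comp_right (ι₂ k (A ⊗[k] H) (A ⊗[k] H))
  have c₂₃ := (imagesCommute_ι (k := k) (Y := A ⊗[k] H) (Z := A ⊗[k] H)).map hi
  have hA := isAlgebraMorphism_ι₁ (k := k) (Y := A) (Z := H)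
  have hH := isAlgebraMorphism_ι₂ (k := k) (Y := A) (Z := H)
  generalize ι₁ k (A ⊗[k] H) ((A ⊗[k] H) ⊗[k] (A ⊗[k] H)) = i₁ at *
  generalize ι₂ k (A ⊗[k] H) ((A ⊗[k] H) ⊗[k] (A ⊗[k] H)) ∘ₗ ι₁ k _ _ = i₂ at *
  generalize ι₂ k (A ⊗[k] H) ((A ⊗[k] H) ⊗[k] (A ⊗[k] H)) ∘ₗ ι₂ k _ _ = i₃ at *
  have := hmp.conv_bicrossΔ_conv (α₁ := i₁ ∘ₗ ι₁ k A H) (η₃ := i₃ ∘ₗ ι₂ k A H)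
    (hi₁.comp hH) (hi₂.comp hH) (hi₂.comp hA) (hi₃.comp hA)
    ((c₁₂.comp_left _).comp_right _) ((c₁₂.comp_left _).comp_right _)
    ((c₁₃.comp_left _).comp_right _) ((c₂₃.comp_left _).comp_right _)
    (imagesCommute_ι.map hi₂) ((c₂₃.comp_left _).comp_right _)
  rw [← hi₁.eq_tmulMul, ← hi₂.eq_tmulMul, ← hi₃.eq_tmulMul] at this
  exact LinearMap.congr_fun this w

/-- The antipode `S̃` of the bicrossed coproduct is a left convolution inverse of the identity. -/
theorem IsHopfMatchedPair.conv_bicrossS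
    (hmp : IsHopfMatchedPair k A H sA.Δ sA.ε sH.Δ sH.ε ρ φ) :
    conv (bicrossΔ k A H sA.Δ sH.Δ ρ φ) (bicrossS k A H sA.S sH.S ρ φ) LinearMap.id
      = tmulMul (unitMap (A ⊗[k] H) sA.ε) (unitMap (A ⊗[k] H) sH.ε) := by
  have hρφ := hmp.2.1.tmulMul hmp.2.2.2.1 fun a h => (hmp.2.2.2.2.2.2.2.2 a h).symm
  set σ : H ⊗[k] A →ₗ[k] A ⊗[k] H :=
    TensorProduct.map sA.S sH.S ∘ₗ (TensorProduct.comm k H A).toLinearMap with hσ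
  have hσ_mul : ∀ s t, σ (s * t) = σ t * σ s := fun s t => by
    induction s with
    | zero => simp
    | add s₁ s₂ h₁ h₂ => simp only [map_add, add_mul, mul_add, h₁, h₂]
    | tmul y c =>
      induction t with
      | zero => simp
      | add s₁ s₂ h₁ h₂ => simp only [map_add, mul_add, add_mul, h₁, h₂]
      | tmul y' c' => simp [hσ, sA.S_mul, sH.S_mul]
  have hS : bicrossS k A H sA.S sH.S ρ φ = σ ∘ₗ tmulMul ρ φ := by
    ext a h
    exact (hσ_mul (ρ a) (φ h)).symm
  have hS_mul : ∀ s t, bicrossS k A H sA.S sH.S ρ φ (s * t)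
      = bicrossS k A H sA.S sH.S ρ φ t * bicrossS k A H sA.S sH.S ρ φ s := fun s t => by
    simp only [hS, LinearMap.comp_apply, hρφ.1, hσ_mul]
  have hB_mul : ∀ s x y, tmulMul (bicrossS k A H sA.S sH.S ρ φ) LinearMap.id (s * x ⊗ₜ y)
      = bicrossS k A H sA.S sH.S ρ φ x
        * tmulMul (bicrossS k A H sA.S sH.S ρ φ) LinearMap.id s * y := fun s x y => by
    induction s with
    | zero => simp
    | add s₁ s₂ h₁ h₂ => simp only [map_add, mul_add, add_mul, h₁, h₂]
    | tmul x' y' => simp [hS_mul, mul_assoc]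
  have hB : ∀ s t c, tmulMul (bicrossS k A H sA.S sH.S ρ φ) LinearMap.id s = algebraMap k _ c →
      tmulMul (bicrossS k A H sA.S sH.S ρ φ) LinearMap.id (s * t)
        = algebraMap k _ c * tmulMul (bicrossS k A H sA.S sH.S ρ φ) LinearMap.id t := by
    intro s t c hs
    induction t with
    | zero => simp
    | add s₁ s₂ h₁ h₂ => simp only [map_add, mul_add, h₁, h₂]
    | tmul x y =>
      rw [hB_mul, hs, ← Algebra.commutes, mul_assoc, tmulMul_tmul, LinearMap.id_apply]
  have hG : ∀ t : H ⊗[k] A, tmulMul σ (ι₁ k A H)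
      ((TensorProduct.assoc k H A A).symm (TensorProduct.map LinearMap.id sA.Δ t))
      = ι₂ k A H (sH.S (TensorProduct.rid k H (TensorProduct.map LinearMap.id sA.ε t))) := by
    intro t
    induction t with
    | zero => simp
    | add s₁ s₂ h₁ h₂ => simp only [map_add, h₁, h₂]
    | tmul y a =>
      have : ∀ u : A ⊗[k] A, tmulMul σ (ι₁ k A H) ((TensorProduct.assoc k H A A).symm (y ⊗ₜ u))
          = LinearMap.mul' k A (TensorProduct.map sA.S LinearMap.id u) ⊗ₜ sH.S y := by
        intro u
        induction u with
        | zero => simp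
        | add s₁ s₂ h₁ h₂ =>
          simp only [map_add, TensorProduct.tmul_add, TensorProduct.add_tmul, h₁, h₂]
        | tmul c b => simp [hσ, ι₁]
      rw [TensorProduct.map_tmul, LinearMap.id_apply, this, sA.antipode_left]
      simp [ι₂, Algebra.algebraMap_eq_smul_one, TensorProduct.smul_tmul]
  have hassoc : ∀ (p q : H ⊗[k] A) (c : A), (TensorProduct.assoc k H A A).symm
      (TensorProduct.map LinearMap.id (ι₁ k A A) p * TensorProduct.assoc k H A A (q ⊗ₜ c))
      = (p * q) ⊗ₜ c := fun p q c => by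
    induction p with
    | zero => simp
    | add s₁ s₂ h₁ h₂ => simp only [map_add, add_mul, TensorProduct.add_tmul, h₁, h₂]
    | tmul y a =>
      induction q with
      | zero => simp
      | add s₁ s₂ h₁ h₂ => simp only [map_add, mul_add, TensorProduct.add_tmul, h₁, h₂]
      | tmul y' a' => simp [ι₁]
  have hρ_part : ∀ u : A ⊗[k] A, tmulMul (bicrossS k A H sA.S sH.S ρ φ) LinearMap.id
      (TensorProduct.map LinearMap.id (ι₁ k A H)
        ((TensorProduct.assoc k A H A).symm (TensorProduct.map LinearMap.id ρ u)))
      = tmulMul σ (ι₁ k A H) ((TensorProduct.assoc k H A A).symm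
          (tmulMul (TensorProduct.map LinearMap.id (ι₁ k A A) ∘ₗ ρ)
            ((TensorProduct.assoc k H A A).toLinearMap ∘ₗ
              TensorProduct.map φ LinearMap.id ∘ₗ ρ) u)) := fun u => by
    induction u with
    | zero => simp
    | add s₁ s₂ h₁ h₂ => simp only [map_add, h₁, h₂]
    | tmul a b =>
      rw [TensorProduct.map_tmul, tmulMul_tmul, LinearMap.id_apply]
      simp only [LinearMap.comp_apply]
      generalize ρ b = t
      induction t with
      | zero => simp
      | add s₁ s₂ h₁ h₂ => simp only [map_add, mul_add, TensorProduct.tmul_add, h₁, h₂]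
      | tmul y c =>
        rw [TensorProduct.map_tmul, LinearEquiv.coe_coe, LinearMap.id_apply, hassoc]
        simp [hS]
  have hφ_part : ∀ u : H ⊗[k] H, tmulMul (bicrossS k A H sA.S sH.S ρ φ) LinearMap.id
      (TensorProduct.map (ι₂ k A H) LinearMap.id
        (TensorProduct.assoc k H A H (TensorProduct.map φ LinearMap.id u)))
      = ι₂ k A H (LinearMap.mul' k H (TensorProduct.map sH.S LinearMap.id u)) := fun u => by
    induction u with
    | zero => simp
    | add s₁ s₂ h₁ h₂ => simp only [map_add, h₁, h₂]
    | tmul x z =>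
      have h₁ : ∀ t : H ⊗[k] A, tmulMul (bicrossS k A H sA.S sH.S ρ φ) LinearMap.id
          (TensorProduct.map (ι₂ k A H) LinearMap.id (TensorProduct.assoc k H A H (t ⊗ₜ z)))
          = tmulMul σ (ι₁ k A H) (TensorProduct.map φ LinearMap.id t) * ι₂ k A H z := fun t => by
        induction t with
        | zero => simp
        | add s₁ s₂ h₁ h₂ => simp only [map_add, add_mul, TensorProduct.add_tmul, h₁, h₂]
        | tmul y c => simp [hS, hmp.2.1.2, ι₁, ι₂, mul_assoc]
      have h₂ : TensorProduct.map φ LinearMap.id (φ x) = (TensorProduct.assoc k H A A).symm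
          (TensorProduct.map LinearMap.id sA.Δ (φ x)) := by
        rw [hmp.2.2.1.1, LinearEquiv.symm_apply_apply]
      rw [TensorProduct.map_tmul, LinearMap.id_apply, h₁, h₂, hG, hmp.2.2.1.2,
        ← isAlgebraMorphism_ι₂.1]
      simp
  ext a h
  refine (hB _ _ (sA.ε a) ((hρ_part (sA.Δ a)).trans ?_)).trans
    (congrArg (algebraMap k (A ⊗[k] H) (sA.ε a) * ·) ((hφ_part (sH.Δ h)).trans ?_))
  · refine (congrArg _ (congrArg _ (hmp.2.2.2.2.2.2.1 a).symm)).trans ?_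
    rw [hG, hmp.2.2.2.2.1, Algebra.algebraMap_eq_smul_one, map_smul, sH.S_one, map_smul,
      isAlgebraMorphism_ι₂.2, Algebra.algebraMap_eq_smul_one]
  · rw [sH.antipode_left, isAlgebraMorphism_ι₂.map_algebraMap]
    rfl

variable {R : Type*} [Ring R] [Algebra k R]

theorem IsHopfMatchedPair.conv_comp_bicrossS
    (hmp : IsHopfMatchedPair k A H sA.Δ sA.ε sH.Δ sH.ε ρ φ) {f : A ⊗[k] H →ₗ[k] R}
    (hf : IsAlgebraMorphism k (A ⊗[k] H) R f) :
    conv (bicrossΔ k A H sA.Δ sH.Δ ρ φ) (f ∘ₗ bicrossS k A H sA.S sH.S ρ φ) f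
      = tmulMul (unitMap R sA.ε) (unitMap R sH.ε) := by
  have := hf.comp_conv (bicrossΔ k A H sA.Δ sH.Δ ρ φ) (bicrossS k A H sA.S sH.S ρ φ) LinearMap.id
  rw [LinearMap.comp_id] at this
  rw [← this, hmp.conv_bicrossS]
  ext a h
  change f (algebraMap k _ (sA.ε a) * algebraMap k _ (sH.ε h)) = _
  rw [hf.1, hf.map_algebraMap, hf.map_algebraMap]
  rfl

theorem IsHopfMatchedPair.conv_bicrossΔ_left_inj
    (hmp : IsHopfMatchedPair k A H sA.Δ sA.ε sH.Δ sH.ε ρ φ) {f : A ⊗[k] H →ₗ[k] R}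
    (hf : IsAlgebraMorphism k (A ⊗[k] H) R f) {α α' : A →ₗ[k] R} {η η' : H →ₗ[k] R}
    (hα : IsAlgebraMorphism k A R α) (hα' : IsAlgebraMorphism k A R α') :
    conv (bicrossΔ k A H sA.Δ sH.Δ ρ φ) f (tmulMul α η)
        = conv (bicrossΔ k A H sA.Δ sH.Δ ρ φ) f (tmulMul α' η')
      ↔ tmulMul α η = tmulMul α' η' := by
  refine ⟨fun h => ?_, fun h => h ▸ rfl⟩
  rw [← hmp.unitMap_conv_bicrossΔ hα, ← hmp.unitMap_conv_bicrossΔ hα', ← hmp.conv_comp_bicrossS hf,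
    ← conv_assoc hmp.bicrossΔ_coassoc, ← conv_assoc hmp.bicrossΔ_coassoc, h]

end BicrossedHopf

section Compatibility

variable {k : Type*} [Field k] {A H : Type*} [Ring A] [Algebra k A] [Ring H] [Algebra k H]
  {R : Type*} [Ring R] [Algebra k R]
  {sA : HopfStruct k A} {B : HopfBrace k H} {ρ ρ' : A →ₗ[k] H ⊗[k] A} {φ : H →ₗ[k] H ⊗[k] A}

theorem IsAlgebraMorphism.imagesCommute_self (hH : ∀ x y : H, x * y = y * x) {f : H →ₗ[k] R}
    (hf : IsAlgebraMorphism k H R f) : ImagesCommute f f := fun x y => by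
  rw [← hf.1, hH, hf.1]

theorem HopfBrace.conv_conv (B : HopfBrace k H) {f g h : H →ₗ[k] R}
    (hf : IsAlgebraMorphism k H R f) (hg : IsAlgebraMorphism k H R g)
    (hh : IsAlgebraMorphism k H R h) (hfg : ImagesCommute f g) (hfh : ImagesCommute f h)
    (hgh : ImagesCommute g h) :
    conv B.snd.Δ f (conv B.fst.Δ g h)
      = conv B.fst.Δ (conv B.snd.Δ f g) (conv B.fst.Δ (f ∘ₗ B.fst.S) (conv B.snd.Δ f h)) := by
  rw [← conv_braceRHS hf hg hh hfg hfh hgh]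
  ext x
  rw [LinearMap.comp_apply, ← B.compat, braceLHS, LinearMap.comp_apply, tmulMul_map_id, conv_apply]

theorem IsComodCoalg.conv_conv (hρ' : IsComodCoalg k A H sA.Δ sA.ε ρ')
    {f : H →ₗ[k] R} {g h : A →ₗ[k] R}
    (hf : IsAlgebraMorphism k H R f) (hg : IsAlgebraMorphism k A R g)
    (hh : IsAlgebraMorphism k A R h) (hfg : ImagesCommute f g) (hfh : ImagesCommute f h)
    (hgh : ImagesCommute g h) :
    conv ρ' f (conv sA.Δ g h) = conv sA.Δ (conv ρ' f g) (conv ρ' f h) := by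
  rw [← comp_comodCoalgRHS hf hg hh hfg hfh hgh]
  ext a
  rw [LinearMap.comp_apply, ← hρ'.1, tmulMul_map_id, conv_apply]

/-- Left convolution by `tmulMul α η` along the smash coproduct is left convolution by the same map
along the bicrossed coproduct. -/
theorem IsHopfMatchedPair.conv_smash_eq
    (hmp : IsHopfMatchedPair k A H sA.Δ sA.ε B.fst.Δ B.fst.ε ρ φ)
    (hH : ∀ x y : H, x * y = y * x) (hρ' : IsAlgebraMorphism k A (H ⊗[k] A) ρ')
    {α β : A →ₗ[k] R} {η γ : H →ₗ[k] R} (hη : IsAlgebraMorphism k H R η)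
    (hβ : IsAlgebraMorphism k A R β) (hηβ : ImagesCommute η β) :
    conv (bicrossΔ k A H sA.Δ B.snd.Δ ρ' (ι₁ k H A)) (tmulMul α η) (tmulMul β γ)
      = conv (bicrossΔ k A H sA.Δ B.fst.Δ ρ φ) (tmulMul α η)
          (tmulMul (conv ρ (η ∘ₗ B.fst.S) (conv ρ' η β))
            (conv B.fst.Δ (conv φ (η ∘ₗ B.fst.S) (conv ρ' η β)) (conv B.snd.Δ η γ))) := by
  have hσ := hη.comp (B.fst.isAlgebraMorphism_S hH)
  have hηη := hη.imagesCommute_self hH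
  have hησ := hηη.comp_right B.fst.S
  have hκ := hρ'.conv hη hβ hηβ
  have hηκ := hηη.conv_right hηβ ρ'
  have hσκ := hηκ.comp_left B.fst.S
  rw [conv_bicrossΔ hη hβ hηβ, conv_ι₁ hβ.2,
    conv_bicrossΔ hη (hmp.2.1.conv hσ hκ hσκ) (hησ.conv_right hηκ ρ),
    conv_assoc hmp.1.1, B.fst.conv_comp_S_right hη, hmp.unitMap_conv_ρ,
    conv_assoc B.fst.coassoc, ← hmp.conv_φ_conv hη hσ hκ hησ hηκ hσκ,
    B.fst.conv_comp_S_right hη, hmp.unitMap_conv_φ hκ, B.fst.unitMap_conv]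

theorem IsHopfMatchedPair.conv_brace_compat_iff
    (hmp : IsHopfMatchedPair k A H sA.Δ sA.ε B.fst.Δ B.fst.ε ρ φ)
    (hH : ∀ x y : H, x * y = y * x) (hρ' : IsAlgebraMorphism k A (H ⊗[k] A) ρ')
    (hρ'c : IsComodCoalg k A H sA.Δ sA.ε ρ')
    {α₁ α₂ α₃ : A →ₗ[k] R} {η₁ η₂ η₃ : H →ₗ[k] R}
    (hf₁ : IsAlgebraMorphism k (A ⊗[k] H) R (tmulMul α₁ η₁))
    (hη₁ : IsAlgebraMorphism k H R η₁)
    (hα₂ : IsAlgebraMorphism k A R α₂) (hη₂ : IsAlgebraMorphism k H R η₂)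
    (hα₃ : IsAlgebraMorphism k A R α₃) (hη₃ : IsAlgebraMorphism k H R η₃)
    (cη₁α₂ : ImagesCommute η₁ α₂) (cη₁η₂ : ImagesCommute η₁ η₂)
    (cη₁α₃ : ImagesCommute η₁ α₃) (cη₁η₃ : ImagesCommute η₁ η₃)
    (cα₂η₂ : ImagesCommute α₂ η₂) (cα₂α₃ : ImagesCommute α₂ α₃)
    (cη₂α₃ : ImagesCommute η₂ α₃) (cη₂η₃ : ImagesCommute η₂ η₃) (cα₃η₃ : ImagesCommute α₃ η₃) :
    conv (bicrossΔ k A H sA.Δ B.snd.Δ ρ' (ι₁ k H A)) (tmulMul α₁ η₁)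
        (conv (bicrossΔ k A H sA.Δ B.fst.Δ ρ φ) (tmulMul α₂ η₂) (tmulMul α₃ η₃))
      = conv (bicrossΔ k A H sA.Δ B.fst.Δ ρ φ)
          (conv (bicrossΔ k A H sA.Δ B.snd.Δ ρ' (ι₁ k H A)) (tmulMul α₁ η₁) (tmulMul α₂ η₂))
          (conv (bicrossΔ k A H sA.Δ B.fst.Δ ρ φ)
            (tmulMul α₁ η₁ ∘ₗ bicrossS k A H sA.S B.fst.S ρ φ)
            (conv (bicrossΔ k A H sA.Δ B.snd.Δ ρ' (ι₁ k H A)) (tmulMul α₁ η₁) (tmulMul α₃ η₃)))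
      ↔ conv ρ' η₁ (conv ρ η₂ α₃)
          = conv ρ (conv B.fst.Δ (conv B.snd.Δ η₁ η₂) (η₁ ∘ₗ B.fst.S)) (conv ρ' η₁ α₃)
        ∧ conv B.snd.Δ η₁ (conv φ η₂ α₃)
          = conv B.fst.Δ (conv φ (conv B.fst.Δ (conv B.snd.Δ η₁ η₂) (η₁ ∘ₗ B.fst.S))
              (conv ρ' η₁ α₃)) η₁ := by
  have hρ := hmp.2.1
  have hφ := hmp.2.2.2.1
  have hΔA := sA.isAlgebraMorphism_Δ
  have hΔ := B.fst.isAlgebraMorphism_Δ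
  have hΔ' := B.snd.isAlgebraMorphism_Δ
  have hσ := hη₁.comp (B.fst.isAlgebraMorphism_S hH)
  have hηη := hη₁.imagesCommute_self hH
  have cση₁ := hηη.comp_left B.fst.S
  have cσα₂ := cη₁α₂.comp_left B.fst.S
  have cση₂ := cη₁η₂.comp_left B.fst.S
  have cσα₃ := cη₁α₃.comp_left B.fst.S
  have hη₁σ := B.fst.conv_comp_S_right hη₁
  have cσσ := cση₁.comp_right B.fst.S
  have cη₁σ := cση₁.symm
  have cα₂η₁ := cη₁α₂.symm
  have cα₂σ := cσα₂.symm
  have cη₂η₁ := cη₁η₂.symm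
  have cη₂σ := cση₂.symm
  have hκ₂ := hρ'.conv hη₁ hα₂ cη₁α₂
  have hκ₃ := hρ'.conv hη₁ hα₃ cη₁α₃
  have hτ := hρ.conv hη₂ hα₃ cη₂α₃
  have hμ := hφ.conv hη₂ hα₃ cη₂α₃
  have cη₁τ := cη₁η₂.conv_right cη₁α₃ ρ
  have cα₂τ := cα₂η₂.conv_right cα₂α₃ ρ
  have hX := hρ'.conv hη₁ hτ cη₁τ
  have hD₂ := hΔ'.conv hη₁ hη₂ cη₁η₂
  have hD₃ := hΔ'.conv hη₁ hη₃ cη₁η₃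
  have cσκ₂ := cση₁.conv_right cσα₂ ρ'
  have cσκ₃ := cση₁.conv_right cσα₃ ρ'
  have cσX := cση₁.conv_right (cση₂.conv_right cσα₃ ρ) ρ'
  have hν₂ := hφ.conv hσ hκ₂ cσκ₂
  have hΛ₃ := hρ.conv hσ hκ₃ cσκ₃
  have cκ₂X : ImagesCommute (conv ρ' η₁ α₂) (conv ρ' η₁ (conv ρ η₂ α₃)) :=
    (hηη.conv_left cα₂η₁ ρ').conv_right (cη₁τ.conv_left cα₂τ ρ') ρ'
  have cD₂σ : ImagesCommute (conv B.snd.Δ η₁ η₂) (η₁ ∘ₗ B.fst.S) := cη₁σ.conv_left cη₂σ _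
  have cD₂κ₃ : ImagesCommute (conv B.snd.Δ η₁ η₂) (conv ρ' η₁ α₃) :=
    (hηη.conv_right cη₁α₃ ρ').conv_left (cη₂η₁.conv_right cη₂α₃ ρ') _
  have cν₂D₂ : ImagesCommute (conv φ (η₁ ∘ₗ B.fst.S) (conv ρ' η₁ α₂)) (conv B.snd.Δ η₁ η₂) :=
    (cση₁.conv_right cση₂ _).conv_left
      ((hηη.conv_right cη₁η₂ _).conv_left (cα₂η₁.conv_right cα₂η₂ _) _) _
  have cD₂Λ₃ : ImagesCommute (conv B.snd.Δ η₁ η₂)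
      (conv ρ (η₁ ∘ₗ B.fst.S) (conv ρ' η₁ α₃)) := cD₂σ.conv_right cD₂κ₃ _
  have cν₂Λ₃ : ImagesCommute (conv φ (η₁ ∘ₗ B.fst.S) (conv ρ' η₁ α₂))
      (conv ρ (η₁ ∘ₗ B.fst.S) (conv ρ' η₁ α₃)) :=
    (cσσ.conv_right cσκ₃ ρ).conv_left
      ((cσκ₂.symm).conv_right
        ((hηη.conv_right cη₁α₃ ρ').conv_left (cα₂η₁.conv_right cα₂α₃ ρ') ρ') ρ) φ
  have hβ := hΔA.conv hα₂ hτ cα₂τ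
  have cη₁β := cη₁α₂.conv_right cη₁τ sA.Δ
  have eβ := hρ'c.conv_conv hη₁ hα₂ hτ cη₁α₂ cη₁τ cα₂τ
  have cμη₃ : ImagesCommute (conv φ η₂ α₃) η₃ := cη₂η₃.conv_left cα₃η₃ φ
  have eγ := B.conv_conv hη₁ hμ hη₃ (cη₁η₂.conv_right cη₁α₃ φ) cη₁η₃ cμη₃
  have hY := hρ.conv (hΔ.conv hD₂ hσ cD₂σ) hκ₃ (cD₂κ₃.conv_left cσκ₃ _)
  have cη₁Y : ImagesCommute η₁ (conv ρ (conv B.fst.Δ (conv B.snd.Δ η₁ η₂) (η₁ ∘ₗ B.fst.S))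
      (conv ρ' η₁ α₃)) :=
    ((hηη.conv_right cη₁η₂ _).conv_right cη₁σ _).conv_right (hηη.conv_right cη₁α₃ _) _
  have cα₂Y : ImagesCommute α₂ (conv ρ (conv B.fst.Δ (conv B.snd.Δ η₁ η₂) (η₁ ∘ₗ B.fst.S))
      (conv ρ' η₁ α₃)) :=
    ((cα₂η₁.conv_right cα₂η₂ _).conv_right cα₂σ _).conv_right (cα₂η₁.conv_right cα₂α₃ _) _
  have cκ₂Y := cη₁Y.conv_left cα₂Y ρ'
  have eA : conv sA.Δ (conv ρ (η₁ ∘ₗ B.fst.S) (conv ρ' η₁ α₂))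
        (conv ρ (conv B.fst.Δ (conv φ (η₁ ∘ₗ B.fst.S) (conv ρ' η₁ α₂)) (conv B.snd.Δ η₁ η₂))
          (conv ρ (η₁ ∘ₗ B.fst.S) (conv ρ' η₁ α₃)))
      = conv ρ (η₁ ∘ₗ B.fst.S) (conv sA.Δ (conv ρ' η₁ α₂)
          (conv ρ (conv B.fst.Δ (conv B.snd.Δ η₁ η₂) (η₁ ∘ₗ B.fst.S)) (conv ρ' η₁ α₃))) := by
    rw [hmp.conv_ρ_conv hσ hκ₂ hY cσκ₂ (cη₁Y.comp_left _) cκ₂Y, ← conv_assoc hmp.1.1,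
      ← conv_assoc hmp.1.1]
  rw [conv_bicrossΔ hη₂ hα₃ cη₂α₃, hmp.conv_smash_eq hH hρ' hη₁ hβ cη₁β,
    hmp.conv_smash_eq hH hρ' hη₁ hα₂ cη₁α₂, hmp.conv_smash_eq hH hρ' hη₁ hα₃ cη₁α₃,
    conv_assoc hmp.bicrossΔ_coassoc (tmulMul α₁ η₁ ∘ₗ _), hmp.conv_comp_bicrossS hf₁,
    hmp.unitMap_conv_bicrossΔ hΛ₃, ← conv_assoc hmp.bicrossΔ_coassoc,
    conv_bicrossΔ (hΔ.conv hν₂ hD₂ cν₂D₂) hΛ₃ (cν₂Λ₃.conv_left cD₂Λ₃ _), eA, eβ, eγ,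
    hmp.conv_bicrossΔ_left_inj hf₁ (hρ.conv hσ (hΔA.conv hκ₂ hX cκ₂X) (cσκ₂.conv_right cσX _))
      (hρ.conv hσ (hΔA.conv hκ₂ hY cκ₂Y) (cσκ₂.conv_right (cη₁Y.comp_left _) _)),
    tmulMul_inj
      (conv_one hρ.2 hσ.2 (conv_one hΔA.2 hκ₂.2 hX.2))
      (conv_one hρ.2 hσ.2 (conv_one hΔA.2 hκ₂.2 hY.2))
      (conv_one hΔ.2 (conv_one hφ.2 hσ.2 (conv_one hΔA.2 hκ₂.2 hX.2))
        (conv_one hΔ.2 (conv_one hΔ'.2 hη₁.2 hμ.2) (conv_one hΔ.2 hσ.2 hD₃.2)))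
      (conv_one hΔ.2 (conv_one hφ.2 (conv_one hΔ.2 hν₂.2 hD₂.2) hΛ₃.2)
        (conv_one hΔ.2 (conv_one hφ.2 hσ.2 hκ₃.2) hD₃.2)),
    hmp.conv_ρ_inj hσ, sA.conv_left_inj hκ₂]
  refine and_congr_right fun hXY => ?_
  have cν₂Y : ImagesCommute (conv φ (η₁ ∘ₗ B.fst.S) (conv ρ' η₁ α₂))
      (conv ρ (conv B.fst.Δ (conv B.snd.Δ η₁ η₂) (η₁ ∘ₗ B.fst.S)) (conv ρ' η₁ α₃)) :=
    (cη₁Y.comp_left _).conv_left cκ₂Y φ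
  rw [conv_assoc hmp.2.2.1.1, hXY, hmp.conv_φ_conv hν₂ hD₂ hΛ₃ cν₂D₂ cν₂Λ₃ cD₂Λ₃,
    conv_assoc hmp.1.1 (conv B.snd.Δ η₁ η₂), ← conv_assoc B.fst.coassoc (conv φ _ (conv ρ _ _)),
    B.fst.conv_left_inj (hφ.conv hν₂ hY cν₂Y), conv_assoc B.fst.coassoc,
    conv_assoc B.fst.coassoc, B.fst.conv_right_inj hD₃,
    hmp.conv_φ_conv hD₂ hσ hκ₃ cD₂σ cD₂κ₃ cσκ₃,
    ← B.fst.conv_right_inj (p := η₁ ∘ₗ B.fst.S)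
      (g := conv B.fst.Δ (conv B.fst.Δ _ _) η₁) hσ,
    ← conv_assoc B.fst.coassoc _ η₁, hη₁σ, B.fst.conv_unitMap]

end Compatibility

section Legs

variable {k : Type*} [Field k]

theorem tmulMul_comp_map_id {X Y Z P W R : Type*} [AddCommGroup X] [Module k X]
    [AddCommGroup Y] [Module k Y] [AddCommGroup Z] [Module k Z] [AddCommGroup P] [Module k P]
    [AddCommGroup W] [Module k W] [Ring R] [Algebra k R] (δ' : X →ₗ[k] Y ⊗[k] P)
    (δ : P →ₗ[k] Z ⊗[k] W) (f : Y →ₗ[k] R) (g : Z →ₗ[k] R) (h : W →ₗ[k] R) :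
    tmulMul f (tmulMul g h) ∘ₗ TensorProduct.map LinearMap.id δ ∘ₗ δ' = conv δ' f (conv δ g h) :=
  LinearMap.ext fun x => tmulMul_map_id δ f g h (δ' x)

section Triple

variable (k)
variable (X Y Z : Type*) [Ring X] [Algebra k X] [Ring Y] [Algebra k Y] [Ring Z] [Algebra k Z]

/-- The inclusion of the first factor of `X ⊗ (Y ⊗ Z)`. -/
abbrev leg₁ : X →ₗ[k] X ⊗[k] (Y ⊗[k] Z) := ι₁ k X (Y ⊗[k] Z)

/-- The inclusion of the second factor of `X ⊗ (Y ⊗ Z)`. -/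
abbrev leg₂ : Y →ₗ[k] X ⊗[k] (Y ⊗[k] Z) := ι₂ k X (Y ⊗[k] Z) ∘ₗ ι₁ k Y Z

/-- The inclusion of the third factor of `X ⊗ (Y ⊗ Z)`. -/
abbrev leg₃ : Z →ₗ[k] X ⊗[k] (Y ⊗[k] Z) := ι₂ k X (Y ⊗[k] Z) ∘ₗ ι₂ k Y Z

theorem isAlgebraMorphism_leg₁ : IsAlgebraMorphism k X _ (leg₁ k X Y Z) := isAlgebraMorphism_ι₁

theorem isAlgebraMorphism_leg₂ : IsAlgebraMorphism k Y _ (leg₂ k X Y Z) :=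
  isAlgebraMorphism_ι₂.comp isAlgebraMorphism_ι₁

theorem isAlgebraMorphism_leg₃ : IsAlgebraMorphism k Z _ (leg₃ k X Y Z) :=
  isAlgebraMorphism_ι₂.comp isAlgebraMorphism_ι₂

theorem imagesCommute_leg₁_leg₂ : ImagesCommute (leg₁ k X Y Z) (leg₂ k X Y Z) :=
  imagesCommute_ι.comp_right _

theorem imagesCommute_leg₁_leg₃ : ImagesCommute (leg₁ k X Y Z) (leg₃ k X Y Z) :=
  imagesCommute_ι.comp_right _

theorem imagesCommute_leg₂_leg₃ : ImagesCommute (leg₂ k X Y Z) (leg₃ k X Y Z) :=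
  imagesCommute_ι.map isAlgebraMorphism_ι₂

end Triple

variable {W A H R : Type*} [Ring W] [Algebra k W] [Ring A] [Algebra k A] [Ring H] [Algebra k H]
  [Ring R] [Algebra k R]

theorem conv_conv_of_braceLHS_eq {Δ Δ' : W →ₗ[k] W ⊗[k] W} {S : W →ₗ[k] W} {f g h : W →ₗ[k] R}
    (hΔ : braceLHS k W Δ Δ' = braceRHS k W Δ Δ' S)
    (hf : IsAlgebraMorphism k W R f) (hg : IsAlgebraMorphism k W R g)
    (hh : IsAlgebraMorphism k W R h) (hfg : ImagesCommute f g) (hfh : ImagesCommute f h)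
    (hgh : ImagesCommute g h) :
    conv Δ' f (conv Δ g h) = conv Δ (conv Δ' f g) (conv Δ (f ∘ₗ S) (conv Δ' f h)) := by
  rw [← conv_braceRHS hf hg hh hfg hfh hgh, ← hΔ]
  exact (tmulMul_comp_map_id Δ' Δ f g h).symm

theorem braceLHS_eq_of_conv_leg {Δ Δ' : W →ₗ[k] W ⊗[k] W} {S : W →ₗ[k] W}
    (h : conv Δ' (leg₁ k W W W) (conv Δ (leg₂ k W W W) (leg₃ k W W W))
      = conv Δ (conv Δ' (leg₁ k W W W) (leg₂ k W W W))
          (conv Δ (leg₁ k W W W ∘ₗ S) (conv Δ' (leg₁ k W W W) (leg₃ k W W W)))) :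
    braceLHS k W Δ Δ' = braceRHS k W Δ Δ' S := by
  rw [← conv_braceRHS (isAlgebraMorphism_leg₁ k W W W) (isAlgebraMorphism_leg₂ k W W W)
    (isAlgebraMorphism_leg₃ k W W W) (imagesCommute_leg₁_leg₂ k W W W)
    (imagesCommute_leg₁_leg₃ k W W W) (imagesCommute_leg₂_leg₃ k W W W),
    ← tmulMul_comp_map_id, tmulMul_legs] at h
  exact h

theorem map_comp_eq_eq42RHS_iff {ΔH Δ'H : H →ₗ[k] H ⊗[k] H} {S : H →ₗ[k] H}
    {ρ ρ' : A →ₗ[k] H ⊗[k] A} :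
    TensorProduct.map LinearMap.id ρ ∘ₗ ρ' = eq42RHS k A H ΔH Δ'H S ρ ρ'
      ↔ conv ρ' (leg₁ k H H A) (conv ρ (leg₂ k H H A) (leg₃ k H H A))
        = conv ρ (conv ΔH (conv Δ'H (leg₁ k H H A) (leg₂ k H H A)) (leg₁ k H H A ∘ₗ S))
            (conv ρ' (leg₁ k H H A) (leg₃ k H H A)) := by
  rw [← comp_eq42RHS (isAlgebraMorphism_leg₁ k H H A) (isAlgebraMorphism_leg₂ k H H A)
    (isAlgebraMorphism_leg₃ k H H A) (imagesCommute_leg₁_leg₂ k H H A)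
    (imagesCommute_leg₁_leg₃ k H H A) (imagesCommute_leg₂_leg₃ k H H A),
    ← tmulMul_comp_map_id, tmulMul_legs, LinearMap.id_comp, LinearMap.id_comp]

theorem map_comp_eq_eq43RHS_iff {ΔH Δ'H : H →ₗ[k] H ⊗[k] H} {S : H →ₗ[k] H}
    {ρ' : A →ₗ[k] H ⊗[k] A} {φ : H →ₗ[k] H ⊗[k] A} :
    TensorProduct.map LinearMap.id φ ∘ₗ Δ'H = eq43RHS k A H ΔH Δ'H S ρ' φ
      ↔ conv Δ'H (leg₁ k H H A) (conv φ (leg₂ k H H A) (leg₃ k H H A))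
        = conv ΔH (conv φ (conv ΔH (conv Δ'H (leg₁ k H H A) (leg₂ k H H A)) (leg₁ k H H A ∘ₗ S))
            (conv ρ' (leg₁ k H H A) (leg₃ k H H A))) (leg₁ k H H A) := by
  rw [← comp_eq43RHS (isAlgebraMorphism_leg₁ k H H A) (isAlgebraMorphism_leg₂ k H H A)
    (isAlgebraMorphism_leg₃ k H H A) (imagesCommute_leg₁_leg₂ k H H A)
    (imagesCommute_leg₁_leg₃ k H H A) (imagesCommute_leg₂_leg₃ k H H A),
    ← tmulMul_comp_map_id, tmulMul_legs, LinearMap.id_comp, LinearMap.id_comp]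

end Legs

/-- Proposition 4.3.  Let `A` be a Hopf algebra and
`(H, Δ, Δ')` a commutative Hopf brace (antipode `S` for `Δ`, `T` for `Δ'`).
Suppose `(A, H, ρ, φ)` is a Hopf matched pair (with `H` carrying `Δ`) and
`(A, ρ')` is a left `H_{Δ'}`-comodule bialgebra.  Let `Δ̃` be the bicrossed
coproduct comultiplication of the matched pair on the tensor product algebra
`A ⊗ H` (with antipode `S̃`), and let `Δ̄` be the smash coproduct
comultiplication `Δ̄(a ⊗ h) = a_1 ⊗ a_{2(-1)'} h_{1'} ⊗ a_{2(0)'} ⊗ h_{2'}` on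
`A ⊗ H_{Δ'}`.  Then `(A ⋈ H, Δ̃, Δ̄)` is a Hopf brace — i.e. the compatibility
condition (2.1) holds for the pair `(Δ̃, Δ̄)` — if and only if (4.2):
`a_{(-1)'} ⊗ a_{(0)'(-1)} ⊗ a_{(0)'(0)}
  = a_{(-1)11'} S(a_{(-1)2}) a_{(0)(-1)'} ⊗ a_{(-1)12'} ⊗ a_{(0)(0)'}`
and (4.3):
`h_{1'} ⊗ h_{2'[0]} ⊗ h_{2'[1]}
  = h_{1[0]11'} S(h_{1[0]2}) h_{1[1](-1)'} h_2 ⊗ h_{1[0]12'} ⊗ h_{1[1](0)'}`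
hold for all `a ∈ A`, `h ∈ H`. -/
theorem proposition_4_3 {k : Type*} [Field k]
    {A H : Type*} [Ring A] [Algebra k A] [Ring H] [Algebra k H]
    (sA : HopfStruct k A)
    (HBH : HopfBrace k H)
    (hHcomm : ∀ x y : H, x * y = y * x)
    (ρ ρ' : A →ₗ[k] H ⊗[k] A) (φ : H →ₗ[k] H ⊗[k] A)
    -- `(A, H, ρ, φ)` is a Hopf matched pair, with `H` carrying `Δ`
    (hmp : IsHopfMatchedPair k A H sA.Δ sA.ε HBH.fst.Δ HBH.fst.ε ρ φ)
    -- `(A, ρ')` is a left `H_{Δ'}`-comodule bialgebra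
    (hρ'coact : LeftCoaction k A H HBH.snd.Δ HBH.snd.ε ρ')
    (hρ'alg : IsAlgebraMorphism k A (H ⊗[k] A) ρ')
    (hρ'coalg : IsComodCoalg k A H sA.Δ sA.ε ρ') :
    (∀ w : A ⊗[k] H,
      braceLHS k (A ⊗[k] H) (bicrossΔ k A H sA.Δ HBH.fst.Δ ρ φ)
          (bicrossΔ k A H sA.Δ HBH.snd.Δ ρ' (ι₁ k H A)) w
        = braceRHS k (A ⊗[k] H) (bicrossΔ k A H sA.Δ HBH.fst.Δ ρ φ)
            (bicrossΔ k A H sA.Δ HBH.snd.Δ ρ' (ι₁ k H A))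
            (bicrossS k A H sA.S HBH.fst.S ρ φ) w)
      ↔ ((∀ a : A,
            (TensorProduct.map (LinearMap.id : H →ₗ[k] H) ρ) (ρ' a)
              = eq42RHS k A H HBH.fst.Δ HBH.snd.Δ HBH.fst.S ρ ρ' a) ∧
         (∀ h : H,
            (TensorProduct.map (LinearMap.id : H →ₗ[k] H) φ) (HBH.snd.Δ h)
              = eq43RHS k A H HBH.fst.Δ HBH.snd.Δ HBH.fst.S ρ' φ h)) := by
  simp only [← LinearMap.comp_apply, ← LinearMap.ext_iff]
  constructor
  · intro h
    rw [map_comp_eq_eq42RHS_iff, map_comp_eq_eq43RHS_iff]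
    have m₁ := isAlgebraMorphism_leg₁ k H H A
    have m₂ := isAlgebraMorphism_leg₂ k H H A
    have m₃ := isAlgebraMorphism_leg₃ k H H A
    have c₁₂ := imagesCommute_leg₁_leg₂ k H H A
    have c₁₃ := imagesCommute_leg₁_leg₃ k H H A
    have c₂₃ := imagesCommute_leg₂_leg₃ k H H A
    have uA : IsAlgebraMorphism k A (H ⊗[k] (H ⊗[k] A)) (unitMap _ sA.ε) :=
      sA.isAlgebraMorphism_unitMap
    have uH : IsAlgebraMorphism k H (H ⊗[k] (H ⊗[k] A)) (unitMap _ HBH.fst.ε) :=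
      HBH.fst.isAlgebraMorphism_unitMap
    have f₁ := uA.tmulMul m₁ (.unitMap_left _ _)
    refine (hmp.conv_brace_compat_iff hHcomm hρ'alg hρ'coalg f₁ m₁ uA m₂ m₃ uH
      (.unitMap_right _ _) c₁₂ c₁₃ (.unitMap_right _ _) (.unitMap_left _ _) (.unitMap_left _ _)
      c₂₃ (.unitMap_right _ _) (.unitMap_right _ _)).1 ?_
    refine conv_conv_of_braceLHS_eq h f₁ (uA.tmulMul m₂ (.unitMap_left _ _))
      (m₃.tmulMul uH (.unitMap_right _ _)) ?_ ?_ ?_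
    · exact .tmulMul_left (.unitMap_left _ _) (.tmulMul_right (.unitMap_right _ _) c₁₂)
    · exact .tmulMul_left (.unitMap_left _ _) (.tmulMul_right c₁₃ (.unitMap_right _ _))
    · exact .tmulMul_left (.unitMap_left _ _) (.tmulMul_right c₂₃ (.unitMap_right _ _))
  · rintro ⟨h₁, h₂⟩
    apply braceLHS_eq_of_conv_leg
    set W := A ⊗[k] H
    have m₁ := isAlgebraMorphism_leg₁ k W W W
    have m₂ := isAlgebraMorphism_leg₂ k W W W
    have m₃ := isAlgebraMorphism_leg₃ k W W W
    have c₁₂ := imagesCommute_leg₁_leg₂ k W W W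
    have c₁₃ := imagesCommute_leg₁_leg₃ k W W W
    have c₂₃ := imagesCommute_leg₂_leg₃ k W W W
    have η₁ := m₁.comp (isAlgebraMorphism_ι₂ (Y := A) (Z := H))
    have η₂ := m₂.comp (isAlgebraMorphism_ι₂ (Y := A) (Z := H))
    have α₃ := m₃.comp (isAlgebraMorphism_ι₁ (Y := A) (Z := H))
    have d₁₂ := (c₁₂.comp_left (ι₂ k A H)).comp_right (ι₂ k A H)
    have d₁₃ := (c₁₃.comp_left (ι₂ k A H)).comp_right (ι₁ k A H)
    have d₂₃ := (c₂₃.comp_left (ι₂ k A H)).comp_right (ι₁ k A H)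
    have := (hmp.conv_brace_compat_iff hHcomm hρ'alg hρ'coalg (m₁.eq_tmulMul ▸ m₁) η₁
      (m₂.comp isAlgebraMorphism_ι₁) η₂ α₃ (m₃.comp isAlgebraMorphism_ι₂)
      ((c₁₂.comp_left (ι₂ k A H)).comp_right (ι₁ k A H)) d₁₂ d₁₃
      ((c₁₃.comp_left (ι₂ k A H)).comp_right (ι₂ k A H)) (imagesCommute_ι.map m₂)
      ((c₂₃.comp_left (ι₁ k A H)).comp_right (ι₁ k A H)) d₂₃
      ((c₂₃.comp_left (ι₂ k A H)).comp_right (ι₂ k A H)) (imagesCommute_ι.map m₃)).2 ⟨?_, ?_⟩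
    · rwa [← m₁.eq_tmulMul, ← m₂.eq_tmulMul, ← m₃.eq_tmulMul] at this
    · rw [← comp_eq42RHS η₁ η₂ α₃ d₁₂ d₁₃ d₂₃, ← h₁, tmulMul_comp_map_id]
    · rw [← comp_eq43RHS η₁ η₂ α₃ d₁₂ d₁₃ d₂₃, ← h₂, tmulMul_comp_map_id]

end HopfPaper
end
end
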